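/- arXiv:1610.01377 — 14 statements merged into one kernel-verified Lean document; each statement's English description precedes it below -/
import Mathlib

section
/- Let 1 ≤ d < r, let M be a representation of Γ_r and let U ∈ Gr_{d,r}. Then Hom(X_U, M) = 0 if and only if Soc_U(M) = M₂, i.e. if and only if the only m ∈ M₁ with x^M_u(m) = 0 for all u ∈ U is m = 0. -/
open Module LinearMap

universe u

/-- A finite-dimensional representation of the `r`-Kronecker quiver `Γ_r` over `k`:
two finite-dimensional `k`-vector spaces `M₁`, `M₂` and `r` linear maps `M₁ → M₂`. -/
structure KRep (k : Type u) [Field k] (r : ℕ) : Type (u + 1) where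
  V1 : Type u
  V2 : Type u
  [addV1 : AddCommGroup V1]
  [addV2 : AddCommGroup V2]
  [modV1 : Module k V1]
  [modV2 : Module k V2]
  [finV1 : FiniteDimensional k V1]
  [finV2 : FiniteDimensional k V2]
  f : Fin r → V1 →ₗ[k] V2

attribute [instance] KRep.addV1 KRep.addV2 KRep.modV1 KRep.modV2 KRep.finV1 KRep.finV2

variable {k : Type u} [Field k] {r : ℕ}

/-- For `α ∈ k^r`, the operator `x^M_α = ∑ i, αᵢ • M(γᵢ) : M₁ → M₂`. -/
def KRep.x (M : KRep k r) (α : Fin r → k) : M.V1 →ₗ[k] M.V2 :=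
  ∑ i, α i • M.f i

/-- The space `Hom(M, N)` of morphisms of representations, as a `k`-submodule of the
pairs of linear maps `(f₁ : M₁ → N₁, f₂ : M₂ → N₂)`; membership is the condition
`f₂ ∘ M(γᵢ) = N(γᵢ) ∘ f₁` for all `i`. -/
def KHom (M N : KRep k r) : Submodule k ((M.V1 →ₗ[k] N.V1) × (M.V2 →ₗ[k] N.V2)) where
  carrier := {p | ∀ i, p.2 ∘ₗ M.f i = N.f i ∘ₗ p.1}
  add_mem' := by
    intro a b ha hb i
    simp only [Prod.snd_add, Prod.fst_add, LinearMap.add_comp, LinearMap.comp_add, ha i, hb i]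
  zero_mem' := by intro i; simp
  smul_mem' := by
    intro c a ha i
    simp only [Prod.smul_snd, Prod.smul_fst, LinearMap.smul_comp, LinearMap.comp_smul, ha i]

/-- The representation `X_U` attached to a subspace `U ⊆ k^r`:
`(X_U)₁ = k`, `(X_U)₂ = k^r/U`, and `X_U(γᵢ)(c) = c · (eᵢ + U)`. -/
def XU (U : Submodule k (Fin r → k)) : KRep k r where
  V1 := k
  V2 := (Fin r → k) ⧸ U
  f := fun i => LinearMap.toSpanSingleton k _ (Submodule.Quotient.mk (Pi.single i 1))

/-- The `M₁`-part of the socle: `{m ∈ M₁ : x^M_u(m) = 0 for all u ∈ U}`. -/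
def KRep.socKer (M : KRep k r) (U : Submodule k (Fin r → k)) : Submodule k M.V1 :=
  ⨅ u ∈ U, LinearMap.ker (M.x u)

/-- `Soc_U(M) = {m ∈ M₁ : x^M_u(m) = 0 ∀ u ∈ U} ⊕ M₂`, as a subspace of `M₁ ⊕ M₂`. -/
def KRep.soc (M : KRep k r) (U : Submodule k (Fin r → k)) : Submodule k (M.V1 × M.V2) :=
  (M.socKer U).prod ⊤

/-- `Rad_U(M) = ∑_{u ∈ U} x^M_u(M₁) ⊆ M₂`. -/
def KRep.rad (M : KRep k r) (U : Submodule k (Fin r → k)) : Submodule k M.V2 :=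
  ⨆ u ∈ U, LinearMap.range (M.x u)

/-- Direct sum of two representations. -/
def KRep.sum (M N : KRep k r) : KRep k r where
  V1 := M.V1 × N.V1
  V2 := M.V2 × N.V2
  f := fun i => (M.f i).prodMap (N.f i)

/-- Isomorphism of representations. -/
def KIso (M N : KRep k r) : Prop :=
  ∃ (e1 : M.V1 ≃ₗ[k] N.V1) (e2 : M.V2 ≃ₗ[k] N.V2),
    ∀ i, (e2 : M.V2 →ₗ[k] N.V2) ∘ₗ M.f i = N.f i ∘ₗ (e1 : M.V1 →ₗ[k] N.V1)

/-- A representation is nonzero if its dimension vector is not `(0,0)`. -/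
def KRep.Nonzero (M : KRep k r) : Prop :=
  finrank k M.V1 ≠ 0 ∨ finrank k M.V2 ≠ 0

/-- A representation is indecomposable if it is nonzero and not isomorphic to a direct
sum of two nonzero representations. -/
def KRep.Indecomposable (M : KRep k r) : Prop :=
  M.Nonzero ∧ ∀ A B : KRep k r, A.Nonzero → B.Nonzero → ¬ KIso M (A.sum B)

/-- A representation is simple if its dimension vector is `(1,0)` or `(0,1)`. -/
def KRep.IsSimple (M : KRep k r) : Prop :=
  (finrank k M.V1 = 1 ∧ finrank k M.V2 = 0) ∨ (finrank k M.V1 = 0 ∧ finrank k M.V2 = 1)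

/-- `M` has constant `d`-socle rank: `dim_k Soc_U(M)` is independent of `U ∈ Gr_{d,r}`. -/
def KRep.ConstSocRank (d : ℕ) (M : KRep k r) : Prop :=
  ∃ c : ℕ, ∀ U : Submodule k (Fin r → k), finrank k U = d → finrank k (M.soc U) = c

/-- `M` has the equal `d`-socle property: `Soc_U(M)` is independent of `U ∈ Gr_{d,r}`. -/
def KRep.ESP (d : ℕ) (M : KRep k r) : Prop :=
  ∀ U V : Submodule k (Fin r → k), finrank k U = d → finrank k V = d → M.soc U = M.soc V

/-- `M` has constant `d`-radical rank: `dim_k Rad_U(M)` is independent of `U ∈ Gr_{d,r}`. -/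
def KRep.ConstRadRank (d : ℕ) (M : KRep k r) : Prop :=
  ∃ c : ℕ, ∀ U : Submodule k (Fin r → k), finrank k U = d → finrank k (M.rad U) = c

/-- `M` has the equal `d`-radical property: `Rad_U(M)` is independent of `U ∈ Gr_{d,r}`. -/
def KRep.ERP (d : ℕ) (M : KRep k r) : Prop :=
  ∀ U V : Submodule k (Fin r → k), finrank k U = d → finrank k V = d → M.rad U = M.rad V

lemma KRep.mem_socKer (M : KRep k r) (U : Submodule k (Fin r → k)) (m : M.V1) :
    m ∈ M.socKer U ↔ ∀ u ∈ U, M.x u m = 0 := by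
  simp [KRep.socKer, Submodule.mem_iInf]

/-- The linear map `α ↦ x^M_α(m)`. -/
def KRep.ev (M : KRep k r) (m : M.V1) : (Fin r → k) →ₗ[k] M.V2 where
  toFun α := M.x α m
  map_add' a b := by
    simp [KRep.x, LinearMap.sum_apply, add_smul, Finset.sum_add_distrib]
  map_smul' c a := by
    simp [KRep.x, LinearMap.sum_apply, mul_smul, Finset.smul_sum]

lemma KRep.ev_single (M : KRep k r) (m : M.V1) (i : Fin r) :
    M.ev m (Pi.single i 1) = M.f i m := by
  change M.x (Pi.single i 1) m = _
  rw [KRep.x, LinearMap.sum_apply, Finset.sum_eq_single i]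
  · simp
  · intro j _ hj
    simp [Pi.single_eq_of_ne hj]
  · simp

lemma hom_bot_iff_socKer (M : KRep k r) (U : Submodule k (Fin r → k)) :
    KHom (XU U) M = ⊥ ↔ M.socKer U = ⊥ := by
  constructor
  · intro h
    rw [Submodule.eq_bot_iff]
    intro m hm
    rw [KRep.mem_socKer] at hm
    let p1 : k →ₗ[k] M.V1 := LinearMap.toSpanSingleton k _ m
    let p2 : ((Fin r → k) ⧸ U) →ₗ[k] M.V2 := U.liftQ (M.ev m) (fun u hu => hm u hu)
    have hp : ((p1, p2) : ((XU U).V1 →ₗ[k] M.V1) × ((XU U).V2 →ₗ[k] M.V2)) ∈ KHom (XU U) M := by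
      intro i
      refine LinearMap.ext fun (c : k) => ?_
      change p2 (c • Submodule.Quotient.mk (Pi.single i 1)) = M.f i (c • m)
      rw [map_smul, map_smul, ← KRep.ev_single]
      rfl
    rw [h, Submodule.mem_bot] at hp
    have h1 : p1 = 0 := congrArg Prod.fst hp
    have h2 : p1 1 = 0 := by rw [h1]; rfl
    simpa [p1] using h2
  · intro h
    rw [Submodule.eq_bot_iff]
    rintro ⟨p1, p2⟩ hp
    change k →ₗ[k] M.V1 at p1
    change ((Fin r → k) ⧸ U) →ₗ[k] M.V2 at p2
    have hi : ∀ i, p2 (Submodule.Quotient.mk (Pi.single i 1)) = M.f i (p1 1) := by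
      intro i
      have h3 : p2 ((1 : k) • Submodule.Quotient.mk (Pi.single i 1)) = M.f i (p1 1) :=
        LinearMap.congr_fun (hp i) (1 : k)
      rwa [one_smul] at h3
    have he : p2 ∘ₗ U.mkQ = M.ev (p1 1) := by
      refine LinearMap.pi_ext' fun i => LinearMap.ext_ring ?_
      change p2 (Submodule.Quotient.mk (Pi.single i 1)) = M.ev (p1 1) (Pi.single i 1)
      rw [hi, KRep.ev_single]
    have hm : p1 1 = 0 := by
      have : p1 1 ∈ M.socKer U := by
        rw [KRep.mem_socKer]
        intro u hu
        have h4 : p2 (U.mkQ u) = M.x u (p1 1) := LinearMap.congr_fun he u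
        rw [← h4, Submodule.mkQ_apply, (Submodule.Quotient.mk_eq_zero U).2 hu, map_zero]
      rwa [h, Submodule.mem_bot] at this
    have e1 : p1 = 0 := LinearMap.ext_ring hm
    have e2 : p2 = 0 := by
      refine Submodule.linearMap_qext U ?_
      rw [he, hm]
      ext α
      simp [KRep.ev]
    exact Prod.ext e1 e2

/-- For `1 ≤ d < r`, a representation `M` of `Γ_r` and `U ∈ Gr_{d,r}`,
`Hom(X_U, M) = 0` if and only if `Soc_U(M) = M₂`, i.e. if and only if the only
`m ∈ M₁` with `x^M_u(m) = 0` for all `u ∈ U` is `m = 0`. -/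
theorem hom_XU_eq_bot_iff (d : ℕ) (hd : 1 ≤ d) (hdr : d < r) (M : KRep k r)
    (U : Submodule k (Fin r → k)) (hU : finrank k U = d) :
    (KHom (XU U) M = ⊥ ↔ M.soc U = (⊥ : Submodule k M.V1).prod ⊤) ∧
    (KHom (XU U) M = ⊥ ↔ M.socKer U = ⊥) := by
  refine ⟨?_, hom_bot_iff_socKer M U⟩
  rw [hom_bot_iff_socKer]
  constructor
  · intro h
    rw [KRep.soc, h]
  · intro h
    rw [Submodule.eq_bot_iff]
    intro m hm
    have h1 : ((m, 0) : M.V1 × M.V2) ∈ M.soc U := ⟨hm, trivial⟩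
    rw [h] at h1
    exact h1.1
end

section
/- Let 1 ≤ d < r and let M be an indecomposable representation of Γ_r that is not simple. Then: (a) M has the equal d-socle property if and only if Soc_U(M) = M₂ for all U ∈ Gr_{d,r}; (b) M has the equal d-radical property if and only if Rad_U(M) = M₂ for all U ∈ Gr_{d,r}. -/
open Module LinearMap

universe u

variable {k : Type u} [Field k] {r : ℕ}

/-- A compatible pair of direct sum decompositions of an indecomposable is trivial. -/
theorem KRep.no_split (M : KRep k r) (hind : M.Indecomposable)
    (A1 B1 : Submodule k M.V1) (A2 B2 : Submodule k M.V2)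
    (h1 : IsCompl A1 B1) (h2 : IsCompl A2 B2)
    (hA : ∀ i, ∀ x ∈ A1, M.f i x ∈ A2) (hB : ∀ i, ∀ x ∈ B1, M.f i x ∈ B2)
    (nA : finrank k A1 ≠ 0 ∨ finrank k A2 ≠ 0) :
    finrank k B1 = 0 ∧ finrank k B2 = 0 := by
  by_contra hc
  have nB : finrank k B1 ≠ 0 ∨ finrank k B2 ≠ 0 := by tauto
  let A : KRep k r := { V1 := A1, V2 := A2, f := fun i => (M.f i).restrict (hA i) }
  let B : KRep k r := { V1 := B1, V2 := B2, f := fun i => (M.f i).restrict (hB i) }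
  refine hind.2 A B nA nB
    ⟨(Submodule.prodEquivOfIsCompl A1 B1 h1).symm, (Submodule.prodEquivOfIsCompl A2 B2 h2).symm, ?_⟩
  intro i
  ext x
  obtain ⟨y, rfl⟩ := (Submodule.prodEquivOfIsCompl A1 B1 h1).surjective x
  refine (LinearEquiv.symm_apply_eq _).2 ?_
  change M.f i _ = (Submodule.prodEquivOfIsCompl A2 B2 h2) ((A.sum B).f i
    ((Submodule.prodEquivOfIsCompl A1 B1 h1).symm (Submodule.prodEquivOfIsCompl A1 B1 h1 y)))
  rw [LinearEquiv.symm_apply_apply]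
  have e1 := Submodule.coe_prodEquivOfIsCompl' A1 B1 h1 y
  have e2 := Submodule.coe_prodEquivOfIsCompl' A2 B2 h2 ((A.sum B).f i y)
  refine Eq.trans ?_ e2.symm
  rw [e1, map_add]
  rfl

theorem KRep.x_single (M : KRep k r) (i : Fin r) : M.x (Pi.single i 1) = M.f i := by
  unfold KRep.x
  rw [Finset.sum_eq_single i]
  · simp
  · intro j _ hj
    simp [Pi.single_eq_of_ne hj]
  · simp

/-- Every standard basis vector lies in a subspace of dimension `d`, for `1 ≤ d ≤ r`. -/
theorem exists_sub_mem (d : ℕ) (hd : 1 ≤ d) (hdr : d < r) (v : Fin r → k) (hv : v ≠ 0) :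
    ∃ U : Submodule k (Fin r → k), finrank k U = d ∧ v ∈ U := by
  have key : ∀ n, n + 1 ≤ r → ∃ U : Submodule k (Fin r → k), finrank k U = n + 1 ∧ v ∈ U := by
    intro n
    induction n with
    | zero =>
      intro _
      exact ⟨k ∙ v, finrank_span_singleton hv, Submodule.mem_span_singleton_self v⟩
    | succ n ih =>
      intro hn
      obtain ⟨U, hU, hvU⟩ := ih (by omega)
      have hne : U ≠ ⊤ := by
        rintro rfl
        rw [finrank_top, Module.finrank_fin_fun] at hU
        omega
      obtain ⟨w, -, hw⟩ := SetLike.exists_of_lt (lt_top_iff_ne_top.2 hne)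
      have hw0 : w ≠ 0 := fun h => hw (h ▸ U.zero_mem)
      have hinf : U ⊓ (k ∙ w) = ⊥ :=
        ((Submodule.disjoint_span_singleton' hw0).2 hw).eq_bot
      have hs := Submodule.finrank_sup_add_finrank_inf_eq U (k ∙ w)
      rw [hinf, finrank_bot, finrank_span_singleton hw0] at hs
      exact ⟨U ⊔ (k ∙ w), by omega, (le_sup_left : U ≤ _) hvU⟩
  obtain ⟨n, rfl⟩ : ∃ n, d = n + 1 := ⟨d - 1, by omega⟩
  exact key n (by omega)

theorem KRep.f_mem_rad (M : KRep k r) (U : Submodule k (Fin r → k)) (i : Fin r)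
    (h : Pi.single i 1 ∈ U) (m : M.V1) : M.f i m ∈ M.rad U := by
  have h2 : LinearMap.range (M.x (Pi.single i 1)) ≤ M.rad U :=
    le_iSup₂_of_le (f := fun u (_ : u ∈ U) => LinearMap.range (M.x u)) _ h le_rfl
  rw [M.x_single] at h2
  exact h2 ⟨m, rfl⟩

theorem KRep.f_eq_zero_of_socKer (M : KRep k r) (U : Submodule k (Fin r → k)) (i : Fin r)
    (h : Pi.single i 1 ∈ U) (m : M.V1) (hm : m ∈ M.socKer U) : M.f i m = 0 := by
  have h2 : M.socKer U ≤ LinearMap.ker (M.x (Pi.single i 1)) :=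
    iInf₂_le (f := fun u (_ : u ∈ U) => LinearMap.ker (M.x u)) _ h
  rw [M.x_single] at h2
  exact h2 hm

theorem KRep.eq_zero_of_forall (M : KRep k r) (hind : M.Indecomposable) (hns : ¬ M.IsSimple)
    (m : M.V1) (hm : ∀ i, M.f i m = 0) : m = 0 := by
  by_contra h0
  obtain ⟨C, hC⟩ := Submodule.exists_isCompl (k ∙ m)
  have hf : finrank k (k ∙ m) = 1 := finrank_span_singleton h0
  obtain ⟨hB1, hB2⟩ := M.no_split hind (k ∙ m) C ⊥ ⊤ hC isCompl_bot_top
    (by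
      intro i x hx
      obtain ⟨c, rfl⟩ := Submodule.mem_span_singleton.1 hx
      simp [hm i]) (by simp) (Or.inl (by omega))
  have := Submodule.finrank_add_eq_of_isCompl hC
  rw [finrank_top] at hB2
  exact hns (Or.inl ⟨by omega, hB2⟩)

theorem KRep.eq_top_of_forall (M : KRep k r) (hind : M.Indecomposable) (hns : ¬ M.IsSimple)
    (R : Submodule k M.V2) (hm : ∀ i m, M.f i m ∈ R) : R = ⊤ := by
  by_contra h0
  obtain ⟨H, hH, hRH⟩ := (eq_top_or_exists_le_coatom R).resolve_left h0
  obtain ⟨L, hL⟩ := Submodule.exists_isCompl H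
  have hat : IsAtom L := hL.symm.isAtom_iff_isCoatom.2 hH
  have hf : finrank k L = 1 := by
    obtain ⟨v, hv, rfl⟩ := (atom_iff_nonzero_span L).1 hat
    exact finrank_span_singleton hv
  obtain ⟨hB1, hB2⟩ := M.no_split hind ⊥ ⊤ L H isCompl_bot_top hL.symm
    (by
      intro i x hx
      rw [(Submodule.mem_bot k).1 hx, map_zero]
      exact L.zero_mem) (fun i x _ => hRH (hm i x)) (Or.inr (by omega))
  have := Submodule.finrank_add_eq_of_isCompl hL
  rw [finrank_top] at hB1
  exact hns (Or.inr ⟨hB1, by omega⟩)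

/-- Let `1 ≤ d < r` and let `M` be an indecomposable representation of
`Γ_r` that is not simple. Then (a) `M` has the equal `d`-socle property iff
`Soc_U(M) = M₂` for all `U ∈ Gr_{d,r}`, and (b) `M` has the equal `d`-radical property
iff `Rad_U(M) = M₂` for all `U ∈ Gr_{d,r}`. -/
theorem esp_erp_iff_of_indecomposable (d : ℕ) (hd : 1 ≤ d) (hdr : d < r) (M : KRep k r)
    (hind : M.Indecomposable) (hns : ¬ M.IsSimple) :
    (KRep.ESP d M ↔ ∀ U : Submodule k (Fin r → k), finrank k U = d →
        M.soc U = (⊥ : Submodule k M.V1).prod ⊤) ∧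
    (KRep.ERP d M ↔ ∀ U : Submodule k (Fin r → k), finrank k U = d →
        M.rad U = ⊤) := by
  constructor
  · constructor
    · intro h U hU
      suffices M.socKer U = ⊥ by rw [KRep.soc, this]
      refine (Submodule.eq_bot_iff _).2 fun m hm => M.eq_zero_of_forall hind hns m fun i => ?_
      obtain ⟨V, hV, hiV⟩ := exists_sub_mem d hd hdr (Pi.single i (1 : k)) (by simp)
      have hmU : ((m, 0) : M.V1 × M.V2) ∈ M.soc U := ⟨hm, trivial⟩
      rw [h U V hU hV] at hmU
      exact M.f_eq_zero_of_socKer V i hiV m hmU.1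
    · intro h U V hU hV
      rw [h U hU, h V hV]
  · constructor
    · intro h U hU
      refine M.eq_top_of_forall hind hns _ fun i m => ?_
      obtain ⟨V, hV, hiV⟩ := exists_sub_mem d hd hdr (Pi.single i (1 : k)) (by simp)
      rw [h U V hU hV]
      exact M.f_mem_rad V i hiV m
    · intro h U V hU hV
      rw [h U hU, h V hV]
end

section
/- Let 1 ≤ d < r and let M be a representation of Γ_r. Then: (a) M has constant d-socle rank if and only if the dual representation DM has constant d-radical rank; (b) M has the equal d-socle property if and only if DM has the equal d-radical property. -/
open Module LinearMap

universe u

variable {k : Type u} [Field k] {r : ℕ}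

/-- The dual representation `DM`: `(DM)₁ = M₂*`, `(DM)₂ = M₁*`, `DM(γᵢ) = M(γᵢ)*`. -/
def KRep.dual (M : KRep k r) : KRep k r where
  V1 := Module.Dual k M.V2
  V2 := Module.Dual k M.V1
  f := fun i => (M.f i).dualMap

theorem KRep.dual_x (M : KRep k r) (α : Fin r → k) :
    M.dual.x α = (M.x α).dualMap := by
  have h : (∑ i, α i • (M.f i).dualMap) = (∑ i, α i • M.f i).dualMap := by
    refine LinearMap.ext fun φ => LinearMap.ext fun m => ?_
    simp [LinearMap.sum_apply, LinearMap.dualMap_apply, map_sum]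
  exact h

theorem iSup_range_dualMap_eq {V W ι : Type*} [AddCommGroup V] [Module k V]
    [FiniteDimensional k V] [AddCommGroup W] [Module k W] (U : Set ι) (x : ι → V →ₗ[k] W) :
    (⨆ u ∈ U, LinearMap.range (x u).dualMap) =
      (⨅ u ∈ U, LinearMap.ker (x u)).dualAnnihilator := by
  have key : (⨆ u ∈ U, LinearMap.range (x u).dualMap).dualCoannihilator =
      ⨅ u ∈ U, LinearMap.ker (x u) := by
    ext m
    rw [Submodule.mem_dualCoannihilator]
    simp only [Submodule.mem_iInf, LinearMap.mem_ker]
    constructor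
    · intro h u hu
      rw [← Module.forall_dual_apply_eq_zero_iff k]
      intro φ
      have h1 : LinearMap.range (x u).dualMap ≤ ⨆ u ∈ U, LinearMap.range (x u).dualMap :=
        le_iSup₂_of_le u hu le_rfl
      exact h ((x u).dualMap φ) (h1 ⟨φ, rfl⟩)
    · intro h φ hφ
      have h1 : (⨆ u ∈ U, LinearMap.range (x u).dualMap) ≤
          LinearMap.ker (Module.Dual.eval k V m) := by
        refine iSup₂_le fun u hu => ?_
        rintro _ ⟨ψ, rfl⟩
        change ψ (x u m) = 0
        rw [h u hu, map_zero]
      exact h1 hφ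
  rw [← key]
  exact Subspace.dualCoannihilator_dualAnnihilator_eq.symm

theorem KRep.dual_rad_eq (M : KRep k r) (U : Submodule k (Fin r → k)) :
    M.dual.rad U = (M.socKer U).dualAnnihilator := by
  rw [KRep.rad]
  simp only [KRep.dual_x]
  exact iSup_range_dualMap_eq (U : Set (Fin r → k)) M.x

theorem KRep.finrank_soc (M : KRep k r) (U : Submodule k (Fin r → k)) :
    finrank k (M.soc U) = finrank k (M.socKer U) + finrank k M.V2 := by
  let e : M.soc U ≃ₗ[k] (M.socKer U × M.V2) :=
    { toFun := fun p => (⟨p.1.1, p.2.1⟩, p.1.2)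
      invFun := fun q => ⟨(q.1.1, q.2), ⟨q.1.2, trivial⟩⟩
      map_add' := fun _ _ => rfl
      map_smul' := fun _ _ => rfl
      left_inv := fun _ => rfl
      right_inv := fun _ => rfl }
  rw [e.finrank_eq, Module.finrank_prod]

theorem KRep.soc_eq_iff (M : KRep k r) (U V : Submodule k (Fin r → k)) :
    M.soc U = M.soc V ↔ M.socKer U = M.socKer V := by
  constructor
  · intro h
    ext m
    have := SetLike.ext_iff.1 h (m, 0)
    simpa [KRep.soc] using this
  · intro h
    rw [KRep.soc, KRep.soc, h]

theorem KRep.finrank_rel (M : KRep k r) (U : Submodule k (Fin r → k)) :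
    finrank k (M.soc U) + finrank k (M.dual.rad U) = finrank k M.V1 + finrank k M.V2 := by
  rw [KRep.finrank_soc, KRep.dual_rad_eq]
  have := Subspace.finrank_add_finrank_dualAnnihilator_eq (M.socKer U)
  change _ + finrank k (M.socKer U).dualAnnihilator = _
  omega

/-- Let `1 ≤ d < r` and `M` a representation of `Γ_r`. Then (a) `M` has
constant `d`-socle rank iff `DM` has constant `d`-radical rank, and (b) `M` has the
equal `d`-socle property iff `DM` has the equal `d`-radical property. -/
theorem constSocRank_iff_dual_constRadRank (d : ℕ) (hd : 1 ≤ d) (hdr : d < r)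
    (M : KRep k r) :
    (KRep.ConstSocRank d M ↔ KRep.ConstRadRank d M.dual) ∧
    (KRep.ESP d M ↔ KRep.ERP d M.dual) := by
  refine ⟨⟨?_, ?_⟩, ?_⟩
  · rintro ⟨c, hc⟩
    refine ⟨finrank k M.V1 + finrank k M.V2 - c, fun U hU => ?_⟩
    have := M.finrank_rel U
    have := hc U hU
    omega
  · rintro ⟨c, hc⟩
    refine ⟨finrank k M.V1 + finrank k M.V2 - c, fun U hU => ?_⟩
    have := M.finrank_rel U
    have := hc U hU
    omega
  · refine forall_congr' fun U => forall_congr' fun V => forall_congr' fun _ =>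
      forall_congr' fun _ => ?_
    rw [KRep.soc_eq_iff, KRep.dual_rad_eq, KRep.dual_rad_eq]
    exact (Subspace.dualAnnihilator_inj (W := M.socKer U) (W' := M.socKer V)).symm
end

section
/- Let 1 ≤ d < r and let U, V ∈ Gr_{d,r}. If U ≠ V then every morphism X_U → X_V is zero; consequently X_U and X_V are isomorphic if and only if U = V. -/
open Module LinearMap

universe u

variable {k : Type u} [Field k] {r : ℕ}

theorem XU_hom_aux (U V : Submodule k (Fin r → k)) (f1 : k →ₗ[k] k)
    (f2 : ((Fin r → k) ⧸ U) →ₗ[k] ((Fin r → k) ⧸ V))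
    (h : ∀ i, f2 ∘ₗ (XU U).f i = (XU V).f i ∘ₗ f1) (x : Fin r → k) :
    f2 (U.mkQ x) = f1 1 • V.mkQ x := by
  have key : f2 ∘ₗ U.mkQ = f1 1 • V.mkQ := by
    refine LinearMap.pi_ext' fun i => LinearMap.ext_ring ?_
    have h1 : f2 ((1 : k) • U.mkQ (Pi.single i 1)) = f1 1 • V.mkQ (Pi.single i 1) :=
      LinearMap.congr_fun (h i) (1 : k)
    rw [one_smul] at h1
    exact h1
  exact LinearMap.congr_fun key x

theorem XU_hom_zero (U V : Submodule k (Fin r → k)) (hfr : finrank k U = finrank k V)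
    (hne : U ≠ V) (f1 : k →ₗ[k] k)
    (f2 : ((Fin r → k) ⧸ U) →ₗ[k] ((Fin r → k) ⧸ V))
    (h : ∀ i, f2 ∘ₗ (XU U).f i = (XU V).f i ∘ₗ f1) : f1 = 0 ∧ f2 = 0 := by
  have key := XU_hom_aux U V f1 f2 h
  have h0 : f1 1 = 0 := by
    by_contra hc
    apply hne
    refine Submodule.eq_of_le_of_finrank_eq (fun x hx => ?_) hfr
    have h1 := key x
    have h2 : U.mkQ x = 0 := by simpa using hx
    rw [h2, map_zero] at h1
    have h3 := (smul_eq_zero.mp h1.symm).resolve_left hc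
    simpa using h3
  refine ⟨LinearMap.ext_ring (by simpa using h0), ?_⟩
  refine LinearMap.ext fun y => ?_
  obtain ⟨x, rfl⟩ := U.mkQ_surjective y
  rw [key, h0, zero_smul, LinearMap.zero_apply]

/-- Let `1 ≤ d < r` and `U, V ∈ Gr_{d,r}`. If `U ≠ V` then every
morphism `X_U → X_V` is zero; consequently `X_U ≅ X_V` if and only if `U = V`. -/
theorem hom_XU_XV_eq_bot_of_ne (d : ℕ) (hd : 1 ≤ d) (hdr : d < r)
    (U V : Submodule k (Fin r → k)) (hU : finrank k U = d) (hV : finrank k V = d) :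
    (U ≠ V → KHom (XU U) (XU V) = ⊥) ∧ (KIso (XU U) (XU V) ↔ U = V) := by
  refine ⟨fun hne => ?_, fun ⟨e1, e2, h⟩ => ?_, ?_⟩
  · refine (Submodule.eq_bot_iff _).mpr ?_
    rintro ⟨f1, f2⟩ hf
    obtain ⟨h1, h2⟩ := XU_hom_zero U V (hU.trans hV.symm) hne f1 f2 hf
    exact Prod.ext h1 h2
  · by_contra hne
    obtain ⟨h1, -⟩ := XU_hom_zero U V (hU.trans hV.symm) hne _ _ h
    have h2 : e1 (1 : k) = (0 : k) := LinearMap.congr_fun h1 (1 : k)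
    exact one_ne_zero (α := k) (e1.map_eq_zero_iff.mp h2)
  · rintro rfl
    exact ⟨LinearEquiv.refl k _, LinearEquiv.refl k _, fun i => rfl⟩
end

section
/- Let 1 ≤ d < r and let M be an indecomposable representation of Γ_r with dimension vector (1, r−d). Then there exists U ∈ Gr_{d,r} such that M is isomorphic to X_U. Consequently the map U ↦ [X_U] is a bijection from Gr_{d,r} onto the set of isomorphism classes of indecomposable representations of Γ_r with dimension vector (1, r−d). -/
open Module LinearMap

universe u

variable {k : Type u} [Field k] {r : ℕ}

/-- A surjective linear map from `k^r / U` killing all `eᵢ + U` has zero target. -/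
theorem finrank_zero_of_kills_gens (U : Submodule k (Fin r → k)) {W : Type u} [AddCommGroup W]
    [Module k W] (g : ((Fin r → k) ⧸ U) →ₗ[k] W) (hg : Function.Surjective g)
    (h0 : ∀ i, g (Submodule.Quotient.mk (Pi.single i 1)) = 0) : finrank k W = 0 := by
  have h : g ∘ₗ U.mkQ = 0 := by
    apply LinearMap.pi_ext'
    intro i
    ext
    simpa using h0 i
  have hs : Subsingleton W := by
    refine ⟨fun a b => ?_⟩
    have key : ∀ w : W, w = 0 := by
      intro w
      obtain ⟨q, rfl⟩ := hg w
      obtain ⟨v, rfl⟩ := U.mkQ_surjective q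
      exact LinearMap.congr_fun h v
    rw [key a, key b]
  exact finrank_zero_of_subsingleton

theorem XU_indec (U : Submodule k (Fin r → k)) : (XU U).Indecomposable := by
  refine ⟨Or.inl ?_, ?_⟩
  · change finrank k k ≠ 0
    simp
  · rintro A B hA hB ⟨e1, e2, he⟩
    have hdim : finrank k A.V1 + finrank k B.V1 = 1 := by
      rw [← Module.finrank_prod]
      exact (LinearEquiv.finrank_eq e1).symm.trans (Module.finrank_self k)
    have he' : ∀ i, e2 (Submodule.Quotient.mk (Pi.single i 1) : (Fin r → k) ⧸ U)
        = (A.f i (e1 (1 : k)).1, B.f i (e1 (1 : k)).2) := by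
      intro i
      have := LinearMap.congr_fun (he i) (1 : k)
      have h2 : (XU U).f i (1 : k) = (Submodule.Quotient.mk (Pi.single i 1) : (Fin r → k) ⧸ U) :=
        one_smul k _
      rw [← h2]
      exact this
    rcases Nat.eq_zero_or_pos (finrank k B.V1) with hb | hb
    · have hB2 : finrank k B.V2 = 0 := by
        have : Subsingleton B.V1 := Module.finrank_zero_iff.mp hb
        refine finrank_zero_of_kills_gens U ((LinearMap.snd k A.V2 B.V2) ∘ₗ e2.toLinearMap) ?_ ?_
        · exact (Prod.snd_surjective).comp e2.surjective
        · intro i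
          refine (congrArg Prod.snd (he' i)).trans ?_
          change B.f i (e1 (1 : k)).2 = 0
          rw [Subsingleton.elim (e1 (1 : k)).2 0, map_zero]
      rcases hB with h | h
      · exact h hb
      · exact h hB2
    · have ha : finrank k A.V1 = 0 := by omega
      have hA2 : finrank k A.V2 = 0 := by
        have : Subsingleton A.V1 := Module.finrank_zero_iff.mp ha
        refine finrank_zero_of_kills_gens U ((LinearMap.fst k A.V2 B.V2) ∘ₗ e2.toLinearMap) ?_ ?_
        · exact (Prod.fst_surjective).comp e2.surjective
        · intro i
          refine (congrArg Prod.fst (he' i)).trans ?_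
          change A.f i (e1 (1 : k)).1 = 0
          rw [Subsingleton.elim (e1 (1 : k)).1 0, map_zero]
      rcases hA with h | h
      · exact h ha
      · exact h hA2

theorem XU_inj (U V : Submodule k (Fin r → k)) (h : KIso (XU U) (XU V)) : U = V := by
  obtain ⟨e1, e2, he⟩ := h
  let c : k := e1 (1 : k)
  have hc : c ≠ 0 := by
    intro h0
    have h3 : e1 (1 : k) = e1 (0 : k) := h0.trans (map_zero e1).symm
    exact one_ne_zero (α := k) (e1.injective h3)
  let g : ((Fin r → k) ⧸ U) ≃ₗ[k] ((Fin r → k) ⧸ V) := e2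
  have hg : g.toLinearMap ∘ₗ U.mkQ = c • V.mkQ := by
    apply LinearMap.pi_ext'
    intro i
    ext1
    have := LinearMap.congr_fun (he i) (1 : k)
    have h2 : (XU U).f i (1 : k) = (Submodule.Quotient.mk (Pi.single i 1) : (Fin r → k) ⧸ U) :=
      one_smul k _
    change e2 ((XU U).f i (1 : k)) = c • V.mkQ (Pi.single i 1) at this
    rw [h2] at this
    exact this
  ext a
  have ha : g (U.mkQ a) = c • V.mkQ a := LinearMap.congr_fun hg a
  rw [← Submodule.ker_mkQ U, ← Submodule.ker_mkQ V, LinearMap.mem_ker, LinearMap.mem_ker]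
  rw [← g.map_eq_zero_iff, ha, smul_eq_zero, or_iff_right hc]

theorem exists_XU (d : ℕ) (hdr : d < r)
    (M : KRep k r) (hind : M.Indecomposable)
    (h1 : finrank k M.V1 = 1) (h2 : finrank k M.V2 = r - d) :
    ∃ U : Submodule k (Fin r → k), finrank k U = d ∧ KIso M (XU U) := by
  let e : k ≃ₗ[k] M.V1 := LinearEquiv.ofFinrankEq k M.V1 (by rw [h1, Module.finrank_self])
  let φ : (Fin r → k) →ₗ[k] M.V2 := Fintype.linearCombination k (fun i => M.f i (e 1))
  have hφ : ∀ i, φ (Pi.single i 1) = M.f i (e 1) := by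
    intro i
    simp [φ, Fintype.linearCombination_apply_single]
  have hm : ∀ v : M.V1, v = e.symm v • e 1 := by
    intro v
    rw [← map_smul, smul_eq_mul, mul_one, e.apply_symm_apply]
  have hf : ∀ i v, M.f i v ∈ LinearMap.range φ := by
    intro i v
    rw [hm v, map_smul, ← hφ]
    exact Submodule.smul_mem _ _ ⟨_, rfl⟩
  have hsurj : LinearMap.range φ = ⊤ := by
    by_contra hne
    obtain ⟨C, hC⟩ := Submodule.exists_isCompl (LinearMap.range φ)
    let A : KRep k r :=
      { V1 := M.V1, V2 := LinearMap.range φ, f := fun i => (M.f i).codRestrict _ (hf i) }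
    let B : KRep k r := { V1 := PUnit.{u+1}, V2 := C, f := fun _ => 0 }
    refine hind.2 A B (Or.inl ?_) (Or.inr ?_) ?_
    · change finrank k M.V1 ≠ 0
      omega
    · change finrank k C ≠ 0
      intro h0
      rw [Submodule.finrank_eq_zero] at h0
      subst h0
      exact hne (by simpa using hC.sup_eq_top)
    · let e1 : M.V1 ≃ₗ[k] M.V1 × PUnit.{u+1} :=
        { toFun := fun v => (v, PUnit.unit)
          invFun := fun p => p.1
          map_add' := fun _ _ => rfl
          map_smul' := fun _ _ => rfl
          left_inv := fun _ => rfl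
          right_inv := fun _ => rfl }
      let e2 := (Submodule.prodEquivOfIsCompl _ _ hC).symm
      refine ⟨e1, e2, ?_⟩
      intro i
      apply LinearMap.ext
      intro v
      change e2 (M.f i v) = ((⟨M.f i v, hf i v⟩ : LinearMap.range φ), (0 : C))
      rw [LinearEquiv.symm_apply_eq]
      simp
  refine ⟨LinearMap.ker φ, ?_, e.symm,
    (φ.quotKerEquivOfSurjective (LinearMap.range_eq_top.mp hsurj)).symm, ?_⟩
  · have := LinearMap.finrank_range_add_finrank_ker φ
    rw [hsurj, finrank_top, h2, Module.finrank_fin_fun] at this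
    omega
  · intro i
    apply LinearMap.ext
    intro v
    change (φ.quotKerEquivOfSurjective (LinearMap.range_eq_top.mp hsurj)).symm (M.f i v)
      = e.symm v • (Submodule.Quotient.mk (Pi.single i 1) : (Fin r → k) ⧸ LinearMap.ker φ)
    rw [LinearEquiv.symm_apply_eq, map_smul]
    change M.f i v = e.symm v • φ (Pi.single i 1)
    rw [hφ, ← map_smul, ← hm]

/-- Let `1 ≤ d < r` and let `M` be an indecomposable representation of
`Γ_r` with dimension vector `(1, r−d)`. Then there is `U ∈ Gr_{d,r}` with `M ≅ X_U`.
Consequently `U ↦ [X_U]` is a bijection from `Gr_{d,r}` onto the set of isomorphism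
classes of indecomposable representations of `Γ_r` with dimension vector `(1, r−d)`:
it is injective up to isomorphism, and every `X_U` is indecomposable with dimension
vector `(1, r−d)`. -/
theorem indecomposable_dim_one_r_sub_d_iso_XU (d : ℕ) (hd : 1 ≤ d) (hdr : d < r)
    (M : KRep k r) (hind : M.Indecomposable)
    (h1 : finrank k M.V1 = 1) (h2 : finrank k M.V2 = r - d) :
    (∃ U : Submodule k (Fin r → k), finrank k U = d ∧ KIso M (XU U)) ∧
    (∀ U V : Submodule k (Fin r → k), finrank k U = d → finrank k V = d →
      KIso (XU U) (XU V) → U = V) ∧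
    (∀ U : Submodule k (Fin r → k), finrank k U = d →
      (XU U).Indecomposable ∧ finrank k (XU U).V1 = 1 ∧ finrank k (XU U).V2 = r - d) := by
  refine ⟨exists_XU d hdr M hind h1 h2, fun U V _ _ h => XU_inj U V h, fun U hU => ⟨XU_indec U, ?_, ?_⟩⟩
  · exact Module.finrank_self k
  · change finrank k ((Fin r → k) ⧸ U) = r - d
    rw [Submodule.finrank_quotient, Module.finrank_fin_fun, hU]
end

section
/- Let 1 ≤ c ≤ d < r and let M be an indecomposable representation of Γ_r with dimension vector (1, r−d). Then there exist an indecomposable representation N of Γ_r with dimension vector (1, r−c) and a surjective morphism π : N → M (i.e. both components π₁ and π₂ are surjective). -/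
open Module LinearMap

universe u

variable {k : Type u} [Field k] {r : ℕ}

/-- If the images of the structure maps generate `V2` and `V1` is one-dimensional, then the
representation is indecomposable. -/
theorem indec_of_gen (N : KRep k r) (h1 : finrank k N.V1 = 1)
    (hgen : ∀ (W : Type u) [AddCommGroup W] [Module k W] (g : N.V2 →ₗ[k] W),
      (∀ i, g ∘ₗ N.f i = 0) → g = 0) : N.Indecomposable := by
  refine ⟨Or.inl (by omega), ?_⟩
  intro A B hA hB hiso
  obtain ⟨e1, e2, he'⟩ : ∃ (e1 : N.V1 ≃ₗ[k] A.V1 × B.V1) (e2 : N.V2 ≃ₗ[k] A.V2 × B.V2),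
      ∀ i x, e2 (N.f i x) = (A.f i (e1 x).1, B.f i (e1 x).2) := by
    obtain ⟨e1, e2, he⟩ := hiso
    exact ⟨e1, e2, fun i x => LinearMap.congr_fun (he i) x⟩
  have hs : finrank k A.V1 + finrank k B.V1 = 1 := by
    rw [← h1, LinearEquiv.finrank_eq e1]
    exact (Module.finrank_prod (R := k) (M := A.V1) (M' := B.V1)).symm
  rcases Nat.eq_zero_or_pos (finrank k A.V1) with h0 | h0
  · have hs1 : Subsingleton A.V1 := Module.finrank_zero_iff.mp h0
    have hg := hgen A.V2 ((LinearMap.fst k A.V2 B.V2) ∘ₗ (e2 : N.V2 →ₗ[k] A.V2 × B.V2)) (by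
      intro i
      ext x
      have : (e1 x).1 = 0 := Subsingleton.elim _ _
      show (e2 (N.f i x)).1 = 0
      rw [he', this]; simp)
    have : Subsingleton A.V2 := by
      refine ⟨fun a b => ?_⟩
      have key : ∀ a : A.V2, a = 0 := fun a => by
        have := LinearMap.congr_fun hg (e2.symm (a, 0))
        have h' : (e2 (e2.symm (a, 0))).1 = 0 := this
        rwa [LinearEquiv.apply_symm_apply] at h'
      rw [key a, key b]
    have := Module.finrank_zero_of_subsingleton (R := k) (M := A.V2)
    rcases hA with h | h <;> omega
  · have h0 : finrank k B.V1 = 0 := by omega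
    have hs1 : Subsingleton B.V1 := Module.finrank_zero_iff.mp h0
    have hg := hgen B.V2 ((LinearMap.snd k A.V2 B.V2) ∘ₗ (e2 : N.V2 →ₗ[k] A.V2 × B.V2)) (by
      intro i
      ext x
      have : (e1 x).2 = 0 := Subsingleton.elim _ _
      show (e2 (N.f i x)).2 = 0
      rw [he', this]; simp)
    have : Subsingleton B.V2 := by
      refine ⟨fun a b => ?_⟩
      have key : ∀ a : B.V2, a = 0 := fun a => by
        have := LinearMap.congr_fun hg (e2.symm (0, a))
        have h' : (e2 (e2.symm (0, a))).2 = 0 := this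
        rwa [LinearEquiv.apply_symm_apply] at h'
      rw [key a, key b]
    have := Module.finrank_zero_of_subsingleton (R := k) (M := B.V2)
    rcases hB with h | h <;> omega

/-- In an indecomposable representation with nonzero `V1`, any submodule containing the images
of all structure maps is everything. -/
theorem gen_of_indec (M : KRep k r) (hind : M.Indecomposable) (h1 : finrank k M.V1 = 1)
    (R : Submodule k M.V2) (hR : ∀ i x, M.f i x ∈ R) : R = ⊤ := by
  obtain ⟨C, hC⟩ := Submodule.exists_isCompl R
  by_contra hne
  let A : KRep k r := { V1 := M.V1, V2 := R, f := fun i => (M.f i).codRestrict R (hR i) }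
  let B : KRep k r := { V1 := PUnit.{u+1}, V2 := C, f := fun i => 0 }
  refine hind.2 A B (Or.inl (by show finrank k M.V1 ≠ 0; omega)) (Or.inr ?_) ?_
  · show finrank k C ≠ 0
    intro h
    have hb : C = ⊥ := Submodule.finrank_eq_zero.mp h
    subst hb
    exact hne (by simpa using hC.sup_eq_top)
  · refine ⟨(LinearEquiv.prodUnique (R := k) (M := M.V1) (M₂ := PUnit.{u+1})).symm,
      (Submodule.prodEquivOfIsCompl R C hC).symm, ?_⟩
    intro i
    ext x
    show (Submodule.prodEquivOfIsCompl R C hC).symm (M.f i x) =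
      ((⟨M.f i x, hR i x⟩ : R), (0 : C))
    rw [LinearEquiv.symm_apply_eq]
    simp

/-- Let `1 ≤ c ≤ d < r` and let `M` be an indecomposable representation
of `Γ_r` with dimension vector `(1, r−d)`. Then there exist an indecomposable
representation `N` of `Γ_r` with dimension vector `(1, r−c)` and a surjective morphism
`π : N → M` (both components surjective). -/
theorem exists_indecomposable_epi (c d : ℕ) (hc : 1 ≤ c) (hcd : c ≤ d) (hdr : d < r)
    (M : KRep k r) (hind : M.Indecomposable)
    (h1 : finrank k M.V1 = 1) (h2 : finrank k M.V2 = r - d) :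
    ∃ N : KRep k r, N.Indecomposable ∧ finrank k N.V1 = 1 ∧ finrank k N.V2 = r - c ∧
      ∃ p ∈ KHom N M, Function.Surjective p.1 ∧ Function.Surjective p.2 := by
  obtain ⟨m, hm, hspan⟩ := finrank_eq_one_iff'.mp h1
  let φ : (Fin r → k) →ₗ[k] M.V2 := Fintype.linearCombination k (fun i => M.f i m)
  have hφ : ∀ i, φ (Pi.single i 1) = M.f i m := fun i => by
    simp [φ, Fintype.linearCombination_apply_single]
  have hsurj : LinearMap.range φ = ⊤ := by
    refine gen_of_indec M hind h1 _ ?_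
    intro i x
    obtain ⟨a, rfl⟩ := hspan x
    exact ⟨a • Pi.single i 1, by rw [map_smul, hφ, map_smul]⟩
  have hker : finrank k (LinearMap.ker φ) = d := by
    have := LinearMap.finrank_range_add_finrank_ker φ
    rw [hsurj, finrank_top, h2, Module.finrank_fin_fun] at this
    omega
  obtain ⟨U, hU, hUc⟩ : ∃ U : Submodule k (Fin r → k), U ≤ LinearMap.ker φ ∧ finrank k U = c := by
    obtain ⟨w, hw⟩ := exists_linearIndependent_of_le_finrank (R := k) (M := LinearMap.ker φ)
      (n := c) (by omega)
    have hw' := hw.map' (LinearMap.ker φ).subtype (Submodule.ker_subtype _)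
    refine ⟨Submodule.span k (Set.range ((LinearMap.ker φ).subtype ∘ w)), ?_, ?_⟩
    · rw [Submodule.span_le]
      rintro _ ⟨i, rfl⟩
      exact (w i).2
    · rw [finrank_span_eq_card hw', Fintype.card_fin]
  refine ⟨XU U, XU_indec U, Module.finrank_self k, ?_,
    (LinearMap.toSpanSingleton k M.V1 m, U.liftQ φ hU), ?_, ?_, ?_⟩
  · show finrank k ((Fin r → k) ⧸ U) = r - c
    rw [Submodule.finrank_quotient, Module.finrank_fin_fun, hUc]
  · intro i
    apply LinearMap.ext_ring
    show U.liftQ φ hU ((1 : k) • (Submodule.Quotient.mk (Pi.single i 1))) = M.f i ((1 : k) • m)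
    rw [one_smul, one_smul, ← hφ]
    rfl
  · intro x
    obtain ⟨a, rfl⟩ := hspan x
    exact ⟨a, rfl⟩
  · intro y
    obtain ⟨v, rfl⟩ := LinearMap.range_eq_top.mp hsurj y
    exact ⟨Submodule.Quotient.mk v, rfl⟩
end

section
/- Let 1 ≤ d < r and let U ∈ Gr_{d,r}. Then every nonzero quotient of X_U is indecomposable; that is, for every subrepresentation W ⊊ X_U, the quotient representation X_U/W is indecomposable. -/
open Module LinearMap

universe u

variable {k : Type u} [Field k] {r : ℕ}

/-- The subrepresentation of `M` given by compatible subspaces `W₁ ⊆ M₁`, `W₂ ⊆ M₂`,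
viewed as a representation. -/
def KRep.subRep (M : KRep k r) (W1 : Submodule k M.V1) (W2 : Submodule k M.V2)
    (h : ∀ i, W1 ≤ W2.comap (M.f i)) : KRep k r where
  V1 := W1
  V2 := W2
  f := fun i => (M.f i).restrict (fun _ hx => h i hx)

/-- The quotient representation `M/W` for compatible subspaces `W₁ ⊆ M₁`, `W₂ ⊆ M₂`. -/
def KRep.quotRep (M : KRep k r) (W1 : Submodule k M.V1) (W2 : Submodule k M.V2)
    (h : ∀ i, W1 ≤ W2.comap (M.f i)) : KRep k r where
  V1 := M.V1 ⧸ W1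
  V2 := M.V2 ⧸ W2
  f := fun i => Submodule.mapQ W1 W2 (M.f i) (h i)


theorem KRep.indec_aux (M : KRep k r) (h0 : M.Nonzero) (h1 : finrank k M.V1 ≤ 1)
    (h2 : ∀ S : Submodule k M.V2, (∀ i v, M.f i v ∈ S) → S = ⊤) : M.Indecomposable := by
  refine ⟨h0, ?_⟩
  rintro A B hA hB ⟨f1, f2, he⟩
  let e1 : M.V1 ≃ₗ[k] (A.V1 × B.V1) := f1
  let e2 : M.V2 ≃ₗ[k] (A.V2 × B.V2) := f2
  have hf : finrank k M.V1 = finrank k A.V1 + finrank k B.V1 :=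
    e1.finrank_eq.trans (Module.finrank_prod (R := k) (M := A.V1) (M' := B.V1))
  have hc : ∀ i v, e2 (M.f i v) = (A.f i (e1 v).1, B.f i (e1 v).2) := fun i v =>
    LinearMap.congr_fun (he i) v
  rcases Nat.eq_zero_or_pos (finrank k A.V1) with hz | hz
  · have hs : Subsingleton A.V1 := Module.finrank_zero_iff.1 hz
    have ht := h2 (LinearMap.ker ((LinearMap.fst k A.V2 B.V2) ∘ₗ (e2 : M.V2 →ₗ[k] A.V2 × B.V2)))
      (fun i v => by
        show (e2 (M.f i v)).1 = 0
        rw [hc]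
        show A.f i (e1 v).1 = 0
        rw [Subsingleton.elim (e1 v).1 0, map_zero])
    rcases hA with hA | hA
    · exact hA hz
    · apply hA
      refine Module.finrank_zero_iff.2 (subsingleton_of_forall_eq 0 fun a => ?_)
      have hm : e2.symm ((a, 0) : A.V2 × B.V2) ∈ (⊤ : Submodule k M.V2) := trivial
      rw [← ht] at hm
      have hm' : (e2 (e2.symm ((a, 0) : A.V2 × B.V2))).1 = 0 := hm
      rw [LinearEquiv.apply_symm_apply] at hm'
      exact hm'
  · have hz : finrank k B.V1 = 0 := by omega
    have hs : Subsingleton B.V1 := Module.finrank_zero_iff.1 hz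
    have ht := h2 (LinearMap.ker ((LinearMap.snd k A.V2 B.V2) ∘ₗ (e2 : M.V2 →ₗ[k] A.V2 × B.V2)))
      (fun i v => by
        show (e2 (M.f i v)).2 = 0
        rw [hc]
        show B.f i (e1 v).2 = 0
        rw [Subsingleton.elim (e1 v).2 0, map_zero])
    rcases hB with hB | hB
    · exact hB hz
    · apply hB
      refine Module.finrank_zero_iff.2 (subsingleton_of_forall_eq 0 fun a => ?_)
      have hm : e2.symm ((0, a) : A.V2 × B.V2) ∈ (⊤ : Submodule k M.V2) := trivial
      rw [← ht] at hm
      have hm' : (e2 (e2.symm ((0, a) : A.V2 × B.V2))).2 = 0 := hm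
      rw [LinearEquiv.apply_symm_apply] at hm'
      exact hm'

/-- Let `1 ≤ d < r` and `U ∈ Gr_{d,r}`. Then every nonzero quotient of
`X_U` is indecomposable: for every subrepresentation `W ⊊ X_U`, the quotient `X_U/W` is
indecomposable. -/
theorem quot_XU_indecomposable (d : ℕ) (hd : 1 ≤ d) (hdr : d < r)
    (U : Submodule k (Fin r → k)) (hU : finrank k U = d)
    (W1 : Submodule k (XU U).V1) (W2 : Submodule k (XU U).V2)
    (h : ∀ i, W1 ≤ W2.comap ((XU U).f i)) (hproper : ¬ (W1 = ⊤ ∧ W2 = ⊤)) :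
    ((XU U).quotRep W1 W2 h).Indecomposable := by
  apply KRep.indec_aux
  · by_contra hn
    unfold KRep.Nonzero at hn
    push Not at hn
    obtain ⟨a, b⟩ := hn
    have ha0 := Module.finrank_zero_iff.1 a
    have hb0 := Module.finrank_zero_iff.1 b
    exact hproper
      ⟨Submodule.Quotient.subsingleton_iff.1 ha0,
       Submodule.Quotient.subsingleton_iff.1 hb0⟩
  · have h1 : finrank k ((XU U).V1 ⧸ W1) ≤ finrank k (XU U).V1 := Submodule.finrank_quotient_le W1
    have h2 : finrank k (XU U).V1 = 1 := Module.finrank_self k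
    exact h1.trans h2.le
  · intro S hS
    let q : (Fin r → k) →ₗ[k] ((XU U).V2 ⧸ W2) := W2.mkQ ∘ₗ U.mkQ
    have hq : ∀ v, q v ∈ S := by
      intro v
      rw [pi_eq_sum_univ' v, map_sum]
      refine Submodule.sum_mem _ fun i _ => ?_
      rw [map_smul]
      refine S.smul_mem _ ?_
      have hi := hS i (Submodule.Quotient.mk (1 : k))
      have e : ((XU U).quotRep W1 W2 h).f i (Submodule.Quotient.mk (1 : k))
          = q (Pi.single i 1) := by
        show W2.mkQ ((1 : k) • U.mkQ (Pi.single i 1)) = _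
        rw [one_smul]; rfl
      rw [e] at hi
      convert hi using 2
    rw [eq_top_iff]
    intro y _
    obtain ⟨y', rfl⟩ := Submodule.mkQ_surjective W2 y
    obtain ⟨v, rfl⟩ := Submodule.mkQ_surjective U y'
    exact hq v
end

section
/- Let 1 ≤ c < r. (a) If N is an indecomposable representation of Γ_r with dimension vector (1, c), then every proper subrepresentation W of N satisfies W₁ = 0; in particular W is a direct sum of copies of the simple projective representation with dimension vector (0,1). (b) If M is an indecomposable representation of Γ_r with dimension vector (c, 1), then every proper quotient M/W of M satisfies (M/W)₂ = 0; in particular M/W is a direct sum of copies of the simple injective representation with dimension vector (1,0). -/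
open Module LinearMap

universe u

variable {k : Type u} [Field k] {r : ℕ}

/-- A compatible decomposition of an indecomposable representation is trivial. -/
theorem KRep.Indecomposable.no_split {M : KRep k r} (hM : M.Indecomposable)
    {P1 Q1 : Submodule k M.V1} {P2 Q2 : Submodule k M.V2}
    (h1 : IsCompl P1 Q1) (h2 : IsCompl P2 Q2)
    (hP : ∀ i, P1 ≤ P2.comap (M.f i)) (hQ : ∀ i, Q1 ≤ Q2.comap (M.f i))
    (nP : P1 ≠ ⊥ ∨ P2 ≠ ⊥) (nQ : Q1 ≠ ⊥ ∨ Q2 ≠ ⊥) : False := by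
  refine hM.2 (M.subRep P1 P2 hP) (M.subRep Q1 Q2 hQ) ?_ ?_
    ⟨(Submodule.prodEquivOfIsCompl P1 Q1 h1).symm,
      (Submodule.prodEquivOfIsCompl P2 Q2 h2).symm, ?_⟩
  · exact nP.imp (fun h e => h (Submodule.finrank_eq_zero.mp e))
      (fun h e => h (Submodule.finrank_eq_zero.mp e))
  · exact nQ.imp (fun h e => h (Submodule.finrank_eq_zero.mp e))
      (fun h e => h (Submodule.finrank_eq_zero.mp e))
  · intro i
    apply LinearMap.ext
    intro x
    obtain ⟨y, rfl⟩ := (Submodule.prodEquivOfIsCompl P1 Q1 h1).surjective x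
    have key : M.f i (Submodule.prodEquivOfIsCompl P1 Q1 h1 y) =
        Submodule.prodEquivOfIsCompl P2 Q2 h2
          (⟨M.f i y.1, hP i y.1.2⟩, ⟨M.f i y.2, hQ i y.2.2⟩) := by
      simp
    change (Submodule.prodEquivOfIsCompl P2 Q2 h2).symm
        (M.f i (Submodule.prodEquivOfIsCompl P1 Q1 h1 y)) =
      ((M.subRep P1 P2 hP).sum (M.subRep Q1 Q2 hQ)).f i
        ((Submodule.prodEquivOfIsCompl P1 Q1 h1).symm
          (Submodule.prodEquivOfIsCompl P1 Q1 h1 y))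
    rw [key, LinearEquiv.symm_apply_apply, LinearEquiv.symm_apply_apply]
    rfl

/-- A subspace of a one-dimensional space is trivial. -/
theorem submodule_bot_or_top_of_finrank_one {V : Type u} [AddCommGroup V] [Module k V]
    [FiniteDimensional k V] (h : finrank k V = 1) (W : Submodule k V) : W = ⊥ ∨ W = ⊤ := by
  have hle := Submodule.finrank_le W
  rcases Nat.eq_zero_or_pos (finrank k W) with h0 | h0
  · exact Or.inl (Submodule.finrank_eq_zero.mp h0)
  · exact Or.inr (Submodule.eq_top_of_finrank_eq (by omega))

/-- Let `1 ≤ c < r`. (a) If `N` is an indecomposable representation of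
`Γ_r` with dimension vector `(1, c)`, then every proper subrepresentation `W` of `N`
satisfies `W₁ = 0`. (b) If `M` is indecomposable with dimension vector `(c, 1)`, then
every proper quotient `M/W` of `M` satisfies `(M/W)₂ = 0`. -/
theorem sub_of_one_c_and_quot_of_c_one (c : ℕ) (hc : 1 ≤ c) (hcr : c < r) :
    (∀ (N : KRep k r), N.Indecomposable →
      finrank k N.V1 = 1 → finrank k N.V2 = c →
      ∀ (W1 : Submodule k N.V1) (W2 : Submodule k N.V2),
        (∀ i, W1 ≤ W2.comap (N.f i)) → ¬ (W1 = ⊤ ∧ W2 = ⊤) → W1 = ⊥) ∧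
    (∀ (M : KRep k r), M.Indecomposable →
      finrank k M.V1 = c → finrank k M.V2 = 1 →
      ∀ (W1 : Submodule k M.V1) (W2 : Submodule k M.V2)
        (h : ∀ i, W1 ≤ W2.comap (M.f i)), ¬ (W1 = ⊥ ∧ W2 = ⊥) →
        finrank k ((M.quotRep W1 W2 h).V2) = 0) := by
  constructor
  · intro N hN d1 d2 W1 W2 hW hne
    rcases submodule_bot_or_top_of_finrank_one d1 W1 with h | h
    · exact h
    exfalso
    obtain ⟨C, hC⟩ := W2.exists_isCompl
    refine hN.no_split (P1 := W1) (Q1 := ⊥) (h ▸ isCompl_top_bot) hC hW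
      (fun i => bot_le) (Or.inl ?_) (Or.inr ?_)
    · rintro rfl
      have : finrank k (⊤ : Submodule k N.V1) = 0 := by rw [← h]; simp
      rw [finrank_top] at this
      omega
    · rintro rfl
      exact hne ⟨h, by simpa using hC.sup_eq_top⟩
  · intro M hM d1 d2 W1 W2 hW hne
    change finrank k (M.V2 ⧸ W2) = 0
    rcases submodule_bot_or_top_of_finrank_one d2 W2 with h | h
    · exfalso
      obtain ⟨C, hC⟩ := W1.exists_isCompl
      refine hM.no_split (P2 := W2) (Q2 := ⊤) hC (h ▸ isCompl_bot_top) hW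
        (fun i => le_top) (Or.inl fun h1 => hne ⟨h1, h⟩) (Or.inr fun e => ?_)
      have : finrank k (⊤ : Submodule k M.V2) = 0 := by rw [e]; simp
      rw [finrank_top] at this
      omega
    · subst h
      have := Submodule.finrank_quotient_add_finrank (⊤ : Submodule k M.V2)
      rw [finrank_top] at this
      omega
end

section
/- Let 1 ≤ d ≤ r−2 and let M be a representation of Γ_r. If M has the equal d-socle property then M has the equal (d+1)-socle property, and if M has the equal d-radical property then M has the equal (d+1)-radical property. In particular ESP₁ ⊆ ESP₂ ⊆ … ⊆ ESP_{r−1} and ERP₁ ⊆ ERP₂ ⊆ … ⊆ ERP_{r−1}. -/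
open Module LinearMap

universe u

variable {k : Type u} [Field k] {r : ℕ}

lemma kr_sub (d : ℕ) (hd : 1 ≤ d) (U : Submodule k (Fin r → k)) (hU : finrank k U = d + 1)
    (u : Fin r → k) (hu : u ∈ U) :
    ∃ W : Submodule k (Fin r → k), u ∈ W ∧ W ≤ U ∧ finrank k W = d := by
  have key : ∀ n, 1 ≤ n → n ≤ d + 1 → ∃ W : Submodule k (Fin r → k), u ∈ W ∧ W ≤ U ∧
      finrank k W ≤ d + 1 ∧ finrank k W = n := by
    intro n hn
    induction n, hn using Nat.le_induction with
    | base =>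
      intro _
      have : ∃ v ∈ U, v ≠ 0 ∧ u ∈ Submodule.span k {v} := by
        by_cases h0 : u = 0
        · have hne : U ≠ ⊥ := by
            rintro rfl
            simp at hU
          obtain ⟨v, hv, hv0⟩ := Submodule.exists_mem_ne_zero_of_ne_bot hne
          exact ⟨v, hv, hv0, by simp [h0]⟩
        · exact ⟨u, hu, h0, Submodule.mem_span_singleton_self u⟩
      obtain ⟨v, hv, hv0, huv⟩ := this
      have h1 := finrank_span_singleton (K := k) hv0
      exact ⟨_, huv, by simpa using hv, by omega, h1⟩
    | succ n hn ih =>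
      intro hle
      obtain ⟨W, huW, hWU, _, hW⟩ := ih (by omega)
      have hlt : W < U := lt_of_le_of_ne hWU (by rintro rfl; omega)
      obtain ⟨v, hv, hvW⟩ := SetLike.exists_of_lt hlt
      have hr : finrank k (W ⊔ Submodule.span k {v} : Submodule k (Fin r → k)) = n + 1 := by
        have h1 := Submodule.finrank_add_le_finrank_add_finrank W (Submodule.span k {v})
        have h2 := finrank_span_singleton (K := k) (v := v) (by rintro rfl; simp at hvW)
        have h3 : W < W ⊔ Submodule.span k {v} := by
          refine lt_of_le_of_ne le_sup_left fun h => hvW ?_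
          rw [h]
          exact Submodule.mem_sup_right (Submodule.mem_span_singleton_self v)
        have h4 := Submodule.finrank_lt_finrank_of_lt h3
        omega
      exact ⟨_, Submodule.mem_sup_left huW, sup_le hWU (by simpa using hv), by omega, hr⟩
  obtain ⟨W, h1, h2, _, h3⟩ := key d hd (by omega)
  exact ⟨W, h1, h2, h3⟩

theorem esp_erp_mono (d : ℕ) (hd : 1 ≤ d) (hdr : d + 2 ≤ r) (M : KRep k r) :
    (KRep.ESP d M → KRep.ESP (d + 1) M) ∧ (KRep.ERP d M → KRep.ERP (d + 1) M) := by
  constructor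
  · intro h
    have h' : ∀ U V : Submodule k (Fin r → k), finrank k U = d → finrank k V = d →
        M.socKer U ≤ M.socKer V := by
      intro U V hU hV m hm
      have : (m, (0 : M.V2)) ∈ M.soc U := ⟨hm, trivial⟩
      rw [h U V hU hV] at this
      exact this.1
    have main : ∀ U V : Submodule k (Fin r → k), finrank k U = d + 1 → finrank k V = d + 1 →
        M.socKer U ≤ M.socKer V := by
      intro U V hU hV
      obtain ⟨U0, -, hU0, hU0d⟩ := kr_sub d hd U hU 0 U.zero_mem
      refine le_iInf₂ fun v hv => ?_
      obtain ⟨W, hvW, -, hWd⟩ := kr_sub d hd V hV v hv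
      exact (biInf_mono fun _ hi => hU0 hi).trans ((h' U0 W hU0d hWd).trans (iInf₂_le v hvW))
    intro U V hU hV
    unfold KRep.soc
    rw [le_antisymm (main U V hU hV) (main V U hV hU)]
  · intro h
    have main : ∀ U V : Submodule k (Fin r → k), finrank k U = d + 1 → finrank k V = d + 1 →
        M.rad U ≤ M.rad V := by
      intro U V hU hV
      obtain ⟨V0, -, hV0, hV0d⟩ := kr_sub d hd V hV 0 V.zero_mem
      refine iSup₂_le fun v hv => ?_
      obtain ⟨W, hvW, -, hWd⟩ := kr_sub d hd U hU v hv
      exact (le_iSup₂ (f := fun u (_ : u ∈ W) => LinearMap.range (M.x u)) v hvW).trans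
        ((h W V0 hWd hV0d).le.trans (biSup_mono fun _ hi => hV0 hi))
    intro U V hU hV
    exact le_antisymm (main U V hU hV) (main V U hV hU)
end

section
/- Let 1 ≤ d < r and consider the class 𝒮 of representations M of Γ_r satisfying Soc_U(M) = M₂ for all U ∈ Gr_{d,r}, and the class ℛ of representations M satisfying Rad_U(M) = M₂ for all U ∈ Gr_{d,r}. Then: (a) 𝒮 is closed under subrepresentations and under extensions (if 0 → A → B → C → 0 is a short exact sequence of representations with A, C ∈ 𝒮, then B ∈ 𝒮); (b) ℛ is closed under quotient representations and under extensions. -/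
open Module LinearMap

universe u

variable {k : Type u} [Field k] {r : ℕ}

/-- A short exact sequence `0 → A → B → C → 0` of representations of `Γ_r`, exact on
both components. -/
def KShortExact (A B C : KRep k r)
    (g : (A.V1 →ₗ[k] B.V1) × (A.V2 →ₗ[k] B.V2))
    (h : (B.V1 →ₗ[k] C.V1) × (B.V2 →ₗ[k] C.V2)) : Prop :=
  g ∈ KHom A B ∧ h ∈ KHom B C ∧
  Function.Injective g.1 ∧ Function.Injective g.2 ∧
  Function.Surjective h.1 ∧ Function.Surjective h.2 ∧
  LinearMap.ker h.1 = LinearMap.range g.1 ∧ LinearMap.ker h.2 = LinearMap.range g.2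

/-- Membership in the class `𝒮`: `Soc_U(M) = M₂` for all `U ∈ Gr_{d,r}`. -/
def memS (d : ℕ) (M : KRep k r) : Prop :=
  ∀ U : Submodule k (Fin r → k), finrank k U = d →
    M.soc U = (⊥ : Submodule k M.V1).prod ⊤

/-- Membership in the class `ℛ`: `Rad_U(M) = M₂` for all `U ∈ Gr_{d,r}`. -/
def memR (d : ℕ) (M : KRep k r) : Prop :=
  ∀ U : Submodule k (Fin r → k), finrank k U = d → M.rad U = ⊤

theorem KHom_x {M N : KRep k r} {p : (M.V1 →ₗ[k] N.V1) × (M.V2 →ₗ[k] N.V2)}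
    (hp : p ∈ KHom M N) (α : Fin r → k) (m : M.V1) :
    p.2 (M.x α m) = N.x α (p.1 m) := by
  have h : ∀ i, p.2 (M.f i m) = N.f i (p.1 m) := fun i => LinearMap.congr_fun (hp i) m
  simp [KRep.x, LinearMap.sum_apply, h]

theorem memS_iff (d : ℕ) (M : KRep k r) : memS d M ↔
    ∀ U : Submodule k (Fin r → k), finrank k U = d →
      ∀ m : M.V1, (∀ u ∈ U, M.x u m = 0) → m = 0 := by
  refine forall_congr' fun U => forall_congr' fun _ => ?_
  constructor
  · intro h m hm
    have h1 : ((m, 0) : M.V1 × M.V2) ∈ M.soc U := by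
      simp [KRep.soc, KRep.socKer, Submodule.mem_prod, Submodule.mem_iInf]
      exact hm
    rw [h] at h1
    simpa [Submodule.mem_prod] using h1
  · intro h
    have : M.socKer U = ⊥ := by
      rw [eq_bot_iff]
      intro m hm
      simp only [KRep.socKer, Submodule.mem_iInf, LinearMap.mem_ker] at hm
      simpa using h m hm
    rw [KRep.soc, this]

theorem rad_map_le {M N : KRep k r} {p : (M.V1 →ₗ[k] N.V1) × (M.V2 →ₗ[k] N.V2)}
    (hp : p ∈ KHom M N) (U : Submodule k (Fin r → k)) :
    (M.rad U).map p.2 ≤ N.rad U := by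
  rw [Submodule.map_le_iff_le_comap, KRep.rad]
  refine iSup₂_le fun u hu => ?_
  rintro _ ⟨m, rfl⟩
  rw [Submodule.mem_comap, KHom_x hp]
  exact Submodule.mem_iSup_of_mem u (Submodule.mem_iSup_of_mem hu ⟨_, rfl⟩)

theorem rad_map_eq {M N : KRep k r} {p : (M.V1 →ₗ[k] N.V1) × (M.V2 →ₗ[k] N.V2)}
    (hp : p ∈ KHom M N) (hs : Function.Surjective p.1) (U : Submodule k (Fin r → k)) :
    (M.rad U).map p.2 = N.rad U := by
  refine le_antisymm (rad_map_le hp U) ?_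
  conv_lhs => rw [KRep.rad]
  refine iSup₂_le fun u hu => ?_
  rintro _ ⟨n, rfl⟩
  obtain ⟨m, rfl⟩ := hs n
  rw [← KHom_x hp]
  exact Submodule.mem_map_of_mem
    (Submodule.mem_iSup_of_mem u (Submodule.mem_iSup_of_mem hu ⟨_, rfl⟩))

/-- Let `1 ≤ d < r`. (a) The class `𝒮` of representations `M` with
`Soc_U(M) = M₂` for all `U ∈ Gr_{d,r}` is closed under subrepresentations and
extensions; (b) the class `ℛ` of representations with `Rad_U(M) = M₂` for all
`U ∈ Gr_{d,r}` is closed under quotient representations and extensions. -/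
theorem S_and_R_closed (d : ℕ) (hd : 1 ≤ d) (hdr : d < r) :
    (∀ (M : KRep k r) (W1 : Submodule k M.V1) (W2 : Submodule k M.V2)
      (h : ∀ i, W1 ≤ W2.comap (M.f i)), memS d M → memS d (M.subRep W1 W2 h)) ∧
    (∀ (A B C : KRep k r) g h, KShortExact A B C g h →
      memS d A → memS d C → memS d B) ∧
    (∀ (M : KRep k r) (W1 : Submodule k M.V1) (W2 : Submodule k M.V2)
      (h : ∀ i, W1 ≤ W2.comap (M.f i)), memR d M → memR d (M.quotRep W1 W2 h)) ∧
    (∀ (A B C : KRep k r) g h, KShortExact A B C g h →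
      memR d A → memR d C → memR d B) := by
  refine ⟨?_, ?_, ?_, ?_⟩
  · intro M W1 W2 h hM
    rw [memS_iff] at hM ⊢
    intro U hU m hm
    have hp : ((W1.subtype, W2.subtype) : ((M.subRep W1 W2 h).V1 →ₗ[k] M.V1) ×
        ((M.subRep W1 W2 h).V2 →ₗ[k] M.V2)) ∈ KHom (M.subRep W1 W2 h) M := fun i => rfl
    have := hM U hU (W1.subtype m) fun u hu => by
      have h1 := KHom_x hp u m
      rw [hm u hu, map_zero] at h1
      exact h1.symm
    exact Subtype.ext this
  · rintro A B C g h ⟨hg, hh, hg1, hg2, -, -, hk1, -⟩ hA hC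
    rw [memS_iff] at hA hC ⊢
    intro U hU m hm
    have h0 : h.1 m = 0 := hC U hU _ fun u hu => by
      rw [← KHom_x hh, hm u hu, map_zero]
    have h1 : m ∈ LinearMap.range g.1 := hk1 ▸ LinearMap.mem_ker.2 h0
    obtain ⟨a, rfl⟩ := h1
    have : a = 0 := hA U hU _ fun u hu => hg2 (by rw [KHom_x hg, hm u hu, map_zero])
    rw [this, map_zero]
  · intro M W1 W2 h hM U hU
    have hp : ((W1.mkQ, W2.mkQ) : (M.V1 →ₗ[k] (M.quotRep W1 W2 h).V1) ×
        (M.V2 →ₗ[k] (M.quotRep W1 W2 h).V2)) ∈ KHom M (M.quotRep W1 W2 h) := fun i => rfl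
    rw [← rad_map_eq hp (Submodule.mkQ_surjective W1) U, hM U hU, Submodule.map_top]
    exact LinearMap.range_eq_top.2 (Submodule.mkQ_surjective W2)
  · rintro A B C g h ⟨hg, hh, -, -, hs1, -, -, hk2⟩ hA hC U hU
    have h1 := rad_map_le hg U
    rw [hA U hU, Submodule.map_top, ← hk2] at h1
    have h2 := rad_map_eq hh hs1 U
    rw [hC U hU] at h2
    rw [eq_top_iff]
    intro b _
    have hb : h.2 b ∈ (B.rad U).map h.2 := h2 ▸ Submodule.mem_top
    obtain ⟨c, hc, hcb⟩ := hb
    have h3 : b - c ∈ B.rad U := h1 (by rw [LinearMap.mem_ker, map_sub, hcb, sub_self])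
    simpa using add_mem h3 hc
end

section
/- Let 2 ≤ r < s be integers and let M be an indecomposable representation of Γ_r that is not simple. Then for every m with 1 ≤ m ≤ s−r, the inflation inf(M) does not have constant m-socle rank as a representation of Γ_s; that is, there exist U, V ∈ Gr_{m,s} with dim_k Soc_U(inf(M)) ≠ dim_k Soc_V(inf(M)). -/
open Module LinearMap

universe u

variable {k : Type u} [Field k] {r : ℕ}

/-- Inflation of a representation of `Γ_r` to a representation of `Γ_s` (for `r ≤ s`):
the same vector spaces, the first `r` arrows act as before, the remaining arrows act
as zero. -/
def KRep.inflate (s : ℕ) (M : KRep k r) : KRep k s where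
  V1 := M.V1
  V2 := M.V2
  f := fun i => if h : (i : ℕ) < r then M.f ⟨i, h⟩ else 0

/-- The coordinate subspace spanned by the basis vectors indexed by `σ`. -/
def coordSub {k : Type u} [Field k] {s m : ℕ} (σ : Fin m → Fin s) : Submodule k (Fin s → k) :=
  Submodule.span k (Set.range (fun j => (Pi.single (σ j) (1 : k) : Fin s → k)))

theorem finrank_coordSub {k : Type u} [Field k] {s m : ℕ} (σ : Fin m → Fin s)
    (hσ : Function.Injective σ) : finrank k (coordSub (k := k) σ) = m := by
  have h := (Pi.basisFun k (Fin s)).linearIndependent.comp σ hσ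
  have h2 : (⇑(Pi.basisFun k (Fin s)) ∘ σ) = fun j => (Pi.single (σ j) (1 : k) : Fin s → k) := by
    funext j; simp
  rw [h2] at h
  exact (finrank_span_eq_card h).trans (Fintype.card_fin m)

theorem KRep.x_single_s15 {k : Type u} [Field k] {s : ℕ} (N : KRep k s) (i : Fin s) :
    N.x (Pi.single i 1) = N.f i := by
  unfold KRep.x
  rw [Finset.sum_eq_single i]
  · simp
  · intro b _ hb; simp [Pi.single_eq_of_ne hb]
  · simp

theorem KRep.mem_socKer_s15 {k : Type u} [Field k] {s : ℕ} (N : KRep k s)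
    {U : Submodule k (Fin s → k)} {v : N.V1} (h : v ∈ N.socKer U) (u : Fin s → k) (hu : u ∈ U) :
    N.x u v = 0 := by
  simp only [KRep.socKer, Submodule.mem_iInf, LinearMap.mem_ker] at h
  exact h u hu

theorem KRep.socKer_coordSub {k : Type u} [Field k] {s m : ℕ} (N : KRep k s)
    (σ : Fin m → Fin s) (h : ∀ j, N.f (σ j) = 0) : N.socKer (coordSub σ) = ⊤ := by
  rw [eq_top_iff]
  intro v _
  simp only [KRep.socKer, Submodule.mem_iInf, LinearMap.mem_ker]
  intro u hu
  unfold coordSub at hu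
  induction hu using Submodule.span_induction with
  | mem x hx =>
    obtain ⟨j, rfl⟩ := hx
    simp only []
    rw [KRep.x_single_s15, h j]; rfl
  | zero => simp [KRep.x]
  | add x y _ _ hx hy =>
    have : N.x (x + y) = N.x x + N.x y := by
      simp [KRep.x, add_smul, Finset.sum_add_distrib]
    rw [this, LinearMap.add_apply, hx, hy, add_zero]
  | smul a x _ hx =>
    have : N.x (a • x) = a • N.x x := by
      simp [KRep.x, mul_smul, Finset.smul_sum]
    rw [this, LinearMap.smul_apply, hx, smul_zero]

theorem KRep.zero_split {k : Type u} [Field k] {r : ℕ} (M : KRep k r)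
    (hind : M.Indecomposable) (h0 : ∀ i, M.f i = 0) (a1 b1 a2 b2 : ℕ)
    (h1 : finrank k M.V1 = a1 + b1) (h2 : finrank k M.V2 = a2 + b2)
    (ha : a1 ≠ 0 ∨ a2 ≠ 0) (hb : b1 ≠ 0 ∨ b2 ≠ 0) : False := by
  let A : KRep k r := { V1 := Fin a1 → k, V2 := Fin a2 → k, f := fun _ => 0 }
  let B : KRep k r := { V1 := Fin b1 → k, V2 := Fin b2 → k, f := fun _ => 0 }
  refine hind.2 A B ?_ ?_ ?_
  · simpa [KRep.Nonzero, A] using ha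
  · simpa [KRep.Nonzero, B] using hb
  · have e1 : M.V1 ≃ₗ[k] (Fin a1 → k) × (Fin b1 → k) :=
      LinearEquiv.ofFinrankEq _ _ (by simp [h1])
    have e2 : M.V2 ≃ₗ[k] (Fin a2 → k) × (Fin b2 → k) :=
      LinearEquiv.ofFinrankEq _ _ (by simp [h2])
    refine ⟨e1, e2, fun i => ?_⟩
    rw [h0 i]
    apply LinearMap.ext
    intro v
    have hz : (A.sum B).f i = 0 := by
      apply LinearMap.ext
      intro w
      rfl
    rw [hz]
    exact e2.map_zero

theorem KRep.exists_ne_zero {k : Type u} [Field k] {r : ℕ} (M : KRep k r)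
    (hind : M.Indecomposable) (hns : ¬ M.IsSimple) : ∃ i, M.f i ≠ 0 := by
  by_contra! h0
  have hn := hind.1
  have key := M.zero_split hind h0
  unfold KRep.Nonzero at hn
  unfold KRep.IsSimple at hns
  generalize finrank k M.V1 = d1 at *
  generalize finrank k M.V2 = d2 at *
  by_cases c1 : d1 = 0
  · exact key 0 0 1 (d2 - 1) (by omega) (by omega) (by omega) (by omega)
  · by_cases c2 : d2 = 0
    · exact key 1 (d1 - 1) 0 0 (by omega) (by omega) (by omega) (by omega)
    · exact key d1 0 0 d2 (by omega) (by omega) (by omega) (by omega)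

/-- Let `2 ≤ r < s` and `M` an indecomposable non-simple
representation of `Γ_r`. Then for each `1 ≤ m ≤ s − r`, the inflation `inf(M)` does not
have constant `m`-socle rank over `Γ_s`: there are `U, V ∈ Gr_{m,s}` with
`dim_k Soc_U(inf(M)) ≠ dim_k Soc_V(inf(M))`. -/
theorem inflate_not_constSocRank (s : ℕ) (hr : 2 ≤ r) (hrs : r < s) (M : KRep k r)
    (hind : M.Indecomposable) (hns : ¬ M.IsSimple)
    (m : ℕ) (hm : 1 ≤ m) (hms : m ≤ s - r) :
    ∃ U V : Submodule k (Fin s → k), finrank k U = m ∧ finrank k V = m ∧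
      finrank k ((M.inflate s).soc U) ≠ finrank k ((M.inflate s).soc V) := by
  obtain ⟨i, hi⟩ := M.exists_ne_zero hind hns
  let σ : Fin m → Fin s := fun j => ⟨r + j, by omega⟩
  let τ : Fin m → Fin s := fun j => if (j : ℕ) = 0 then ⟨i, by omega⟩ else ⟨r + j, by omega⟩
  have hσ : Function.Injective σ := by
    intro a b hab
    simp only [σ, Fin.mk.injEq] at hab
    ext; omega
  have hτ : Function.Injective τ := by
    intro a b hab
    have hi2 := i.2
    simp only [τ] at hab
    ext
    split_ifs at hab <;> simp only [Fin.mk.injEq] at hab <;> omega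
  refine ⟨coordSub σ, coordSub τ, finrank_coordSub σ hσ, finrank_coordSub τ hτ, ?_⟩
  have hU : (M.inflate s).soc (coordSub σ) = ⊤ := by
    unfold KRep.soc
    rw [KRep.socKer_coordSub]
    · exact Submodule.prod_top
    · intro j
      simp [KRep.inflate, σ]
      rfl
  rw [hU, finrank_top]
  have hV : (M.inflate s).soc (coordSub τ) < ⊤ := by
    rw [lt_top_iff_ne_top]
    intro htop
    apply hi
    ext v
    have hv : ((v, 0) : (M.inflate s).V1 × (M.inflate s).V2) ∈
        (M.inflate s).soc (coordSub τ) := by rw [htop]; trivial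
    have hv1 : v ∈ (M.inflate s).socKer (coordSub τ) := (Submodule.mem_prod.1 hv).1
    have := (M.inflate s).mem_socKer_s15 hv1 (Pi.single (τ ⟨0, by omega⟩) 1)
      (Submodule.subset_span ⟨_, rfl⟩)
    rw [KRep.x_single_s15] at this
    simp [KRep.inflate, τ] at this
    exact this
  exact (Submodule.finrank_lt hV.ne).ne'
end

section
/- Let 3 ≤ r < s be integers, 1 ≤ d < r, and let M be an indecomposable representation of Γ_r that is not simple. If Hom(M, X_U) = 0 for all U ∈ Gr_{d,r}, then Hom(inf(M), X_V) = 0 for all V ∈ Gr_{d+s−r, s}, where X_V denotes the corresponding representation of Γ_s. -/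
open Module LinearMap

universe u

variable {k : Type u} [Field k] {r : ℕ}

/-- Let `3 ≤ r < s`, `1 ≤ d < r`, and `M` an indecomposable non-simple
representation of `Γ_r`. If `Hom(M, X_U) = 0` for all `U ∈ Gr_{d,r}`, then
`Hom(inf(M), X_V) = 0` for all `V ∈ Gr_{d+s−r, s}`. -/
theorem inflate_hom_to_XV_eq_bot (s : ℕ) (hr : 3 ≤ r) (hrs : r < s)
    (d : ℕ) (hd : 1 ≤ d) (hdr : d < r) (M : KRep k r)
    (hind : M.Indecomposable) (hns : ¬ M.IsSimple)
    (hhom : ∀ U : Submodule k (Fin r → k), finrank k U = d → KHom M (XU U) = ⊥) :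
    ∀ V : Submodule k (Fin s → k), finrank k V = d + (s - r) →
      KHom (M.inflate s) (XU V) = ⊥ := by
  intro V hV
  have hle : r ≤ s := hrs.le
  have hq : finrank k ((Fin s → k) ⧸ V) = r - d := by
    have h := Submodule.finrank_quotient_add_finrank V
    rw [hV, Module.finrank_fin_fun] at h
    omega
  rw [Submodule.eq_bot_iff]
  rintro ⟨f1, f2⟩ hp
  change M.V1 →ₗ[k] k at f1
  change M.V2 →ₗ[k] ((Fin s → k) ⧸ V) at f2
  have hp1 : ∀ (j : Fin r) (m : M.V1), f2 (M.f j m) =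
      f1 m • (Submodule.Quotient.mk (Pi.single (Fin.castLE hle j) 1) : (Fin s → k) ⧸ V) := by
    intro j m
    have h := LinearMap.congr_fun (hp (Fin.castLE hle j)) m
    have h2 : (M.inflate s).f (Fin.castLE hle j) = M.f j := dif_pos j.isLt
    rw [h2] at h
    exact h
  have hp2 : ∀ (i : Fin s) (m : M.V1), ¬ (i : ℕ) < r →
      f1 m • (Submodule.Quotient.mk (Pi.single i 1) : (Fin s → k) ⧸ V) = 0 := by
    intro i m hi
    have h := LinearMap.congr_fun (hp i) m
    have h2 : (M.inflate s).f i = 0 := dif_neg hi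
    rw [h2] at h
    have h3 : f2 0 = f1 m • (Submodule.Quotient.mk (Pi.single i 1) : (Fin s → k) ⧸ V) := h
    rw [← h3, map_zero]
  by_cases hf : f1 = 0
  · subst hf
    obtain ⟨U, hU⟩ : ∃ U : Submodule k (Fin r → k), finrank k U = d := by
      obtain ⟨v, hv⟩ := exists_linearIndependent_of_le_finrank
        (R := k) (M := Fin r → k) (n := d) (by simp; omega)
      exact ⟨_, by rw [finrank_span_eq_card hv, Fintype.card_fin]⟩
    have hq2 : finrank k ((Fin r → k) ⧸ U) = r - d := by
      have h := Submodule.finrank_quotient_add_finrank U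
      rw [hU, Module.finrank_fin_fun] at h
      omega
    let e : ((Fin s → k) ⧸ V) ≃ₗ[k] ((Fin r → k) ⧸ U) :=
      LinearEquiv.ofFinrankEq _ _ (hq.trans hq2.symm)
    have hm : ((0 : M.V1 →ₗ[k] k), e.toLinearMap ∘ₗ f2) ∈ KHom M (XU U) := by
      intro j
      refine LinearMap.ext fun m => ?_
      change e (f2 (M.f j m)) = 
        (0 : k) • (Submodule.Quotient.mk (Pi.single j 1) : (Fin r → k) ⧸ U)
      rw [hp1]
      simp
    have h2 : e.toLinearMap ∘ₗ f2 = 0 := congrArg Prod.snd ((Submodule.mem_bot k).mp ((hhom U hU).le hm))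
    have h3 : f2 = 0 := LinearMap.ext fun x => by
      have := LinearMap.congr_fun h2 x
      simpa using this
    subst h3
    rfl
  · exfalso
    obtain ⟨m0, hm0⟩ : ∃ m, f1 m ≠ 0 := by
      by_contra! h
      exact hf (LinearMap.ext h)
    let g : (Fin r → k) →ₗ[k] ((Fin s → k) ⧸ V) := Fintype.linearCombination k
      (fun j => (Submodule.Quotient.mk (Pi.single (Fin.castLE hle j) 1) : (Fin s → k) ⧸ V))
    have hg : ∀ j, g (Pi.single j 1) = Submodule.Quotient.mk (Pi.single (Fin.castLE hle j) 1) := by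
      intro j
      simp [g, Fintype.linearCombination_apply_single]
    have hs : Function.Surjective g := by
      intro y
      obtain ⟨x, rfl⟩ := V.mkQ_surjective y
      have hx : x = ∑ i, x i • (Pi.single i (1 : k) : Fin s → k) := by
        ext j
        simp [Finset.sum_apply, Pi.single_apply]
      rw [← LinearMap.mem_range, hx, map_sum]
      refine Submodule.sum_mem _ fun i _ => ?_
      rw [map_smul]
      refine Submodule.smul_mem _ _ ?_
      by_cases hi : (i : ℕ) < r
      · exact ⟨Pi.single ⟨i, hi⟩ 1, hg _⟩
      · have h0 := (smul_eq_zero.mp (hp2 i m0 hi)).resolve_left hm0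
        rw [Submodule.mkQ_apply, h0]
        exact Submodule.zero_mem _
    let e := g.quotKerEquivOfSurjective hs
    have hd' : finrank k (LinearMap.ker g) = d := by
      have h := Submodule.finrank_quotient_add_finrank (LinearMap.ker g)
      rw [e.finrank_eq, hq, Module.finrank_fin_fun] at h
      omega
    have hm : (f1, e.symm.toLinearMap ∘ₗ f2) ∈ KHom M (XU (LinearMap.ker g)) := by
      intro j
      refine LinearMap.ext fun m => ?_
      change e.symm (f2 (M.f j m)) =
        f1 m • (Submodule.Quotient.mk (Pi.single j 1) : (Fin r → k) ⧸ LinearMap.ker g)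
      rw [LinearEquiv.symm_apply_eq, map_smul, hp1, ← hg]
      rfl
    exact hf (congrArg Prod.fst ((Submodule.mem_bot k).mp ((hhom _ hd').le hm)))
end

section
/- Let 3 ≤ r < s be integers, 1 ≤ d < r, and let M be an indecomposable representation of Γ_r that is not simple. If Hom(X_U, M) = 0 for all U ∈ Gr_{d,r}, then Hom(X_V, inf(M)) = 0 for all V ∈ Gr_{d+s−r, s}, where X_V denotes the corresponding representation of Γ_s. -/
open Module LinearMap

universe u

variable {k : Type u} [Field k] {r : ℕ}

/-- Let `3 ≤ r < s`, `1 ≤ d < r`, and `M` an indecomposable non-simple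
representation of `Γ_r`. If `Hom(X_U, M) = 0` for all `U ∈ Gr_{d,r}`, then
`Hom(X_V, inf(M)) = 0` for all `V ∈ Gr_{d+s−r, s}`. -/
theorem inflate_hom_from_XV_eq_bot (s : ℕ) (hr : 3 ≤ r) (hrs : r < s)
    (d : ℕ) (hd : 1 ≤ d) (hdr : d < r) (M : KRep k r)
    (hind : M.Indecomposable) (hns : ¬ M.IsSimple)
    (hhom : ∀ U : Submodule k (Fin r → k), finrank k U = d → KHom (XU U) M = ⊥) :
    ∀ V : Submodule k (Fin s → k), finrank k V = d + (s - r) →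
      KHom (XU V) (M.inflate s) = ⊥ := by
  intro V hV
  have hle : r ≤ s := hrs.le
  set π : (Fin s → k) →ₗ[k] (Fin r → k) := LinearMap.funLeft k k (Fin.castLE hle) with hπ
  have hsurj : Function.Surjective π :=
    LinearMap.funLeft_surjective_of_injective k k _ (Fin.castLE_injective hle)
  have hker : finrank k (LinearMap.ker π) + r = s := by
    have h := LinearMap.finrank_range_add_finrank_ker π
    rw [LinearMap.range_eq_top.2 hsurj, finrank_top] at h
    simp only [Module.finrank_fin_fun] at h
    omega
  have hmap : d ≤ finrank k (V.map π) := by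
    have h := LinearMap.finrank_range_add_finrank_ker (π.domRestrict V)
    rw [LinearMap.range_domRestrict] at h
    have h2 : finrank k (LinearMap.ker (π.domRestrict V)) ≤ finrank k (LinearMap.ker π) := by
      let j : LinearMap.ker (π.domRestrict V) →ₗ[k] LinearMap.ker π :=
        LinearMap.codRestrict _ (V.subtype ∘ₗ (LinearMap.ker (π.domRestrict V)).subtype)
          (fun x => x.2)
      refine LinearMap.finrank_le_finrank_of_injective (f := j) ?_
      intro x y hxy
      have hval : (j x : Fin s → k) = j y := by rw [hxy]
      exact Subtype.ext (Subtype.ext hval)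
    omega
  obtain ⟨U, hUle, hU⟩ : ∃ U : Submodule k (Fin r → k), U ≤ V.map π ∧ finrank k U = d := by
    obtain ⟨b, hb⟩ := exists_linearIndependent_of_le_finrank hmap
    have hb' := hb.map' (V.map π).subtype (Submodule.ker_subtype _)
    refine ⟨Submodule.span k (Set.range ((V.map π).subtype ∘ b)), ?_, ?_⟩
    · rw [Submodule.span_le]
      rintro _ ⟨i, rfl⟩
      exact (b i).2
    · simpa using finrank_span_eq_card hb'
  rw [eq_bot_iff]
  rintro ⟨f1, f2⟩ hf
  have hf' : ∀ i, f2 ∘ₗ (XU V).f i = (M.inflate s).f i ∘ₗ f1 := hf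
  let m : M.V1 := f1 (1 : k)
  let L : (Fin r → k) →ₗ[k] M.V2 := Fintype.linearCombination k (fun i => M.f i m)
  let g : (Fin s → k) →ₗ[k] M.V2 := LinearMap.comp f2 V.mkQ
  have hei : ∀ i, g (Pi.single i 1) = (M.inflate s).f i m := by
    intro i
    have h := LinearMap.congr_fun (hf' i) (1 : k)
    have h3 : (XU V).f i (1 : k) = V.mkQ (Pi.single i 1) := one_smul k _
    exact (congrArg f2 h3).symm.trans h
  have hgL : g = L ∘ₗ π := by
    refine LinearMap.pi_ext' fun i => LinearMap.ext_ring ?_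
    change g (Pi.single i 1) = L (π (Pi.single i 1))
    rw [hei]
    by_cases hi : (i : ℕ) < r
    · have h1 : π (Pi.single i 1) = Pi.single ⟨i, hi⟩ 1 := by
        ext j
        simp [hπ, LinearMap.funLeft_apply, Pi.single_apply, Fin.ext_iff]
      rw [h1]
      simp [L, KRep.inflate, hi]
      rfl
    · have h1 : π (Pi.single i 1) = 0 := by
        ext j
        have : (j : ℕ) ≠ i := by have := j.2; omega
        simp [hπ, LinearMap.funLeft_apply, Pi.single_apply, Fin.ext_iff, this]
      rw [h1]
      simp [KRep.inflate, hi]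
      rfl
  have hUL : U ≤ LinearMap.ker L := by
    intro u hu
    obtain ⟨v, hv, rfl⟩ := hUle hu
    have h1 : L (π v) = g v := by rw [hgL]; rfl
    rw [LinearMap.mem_ker, h1]
    have h2 : V.mkQ v = 0 := by simpa using hv
    change f2 (V.mkQ v) = 0
    rw [h2]
    exact map_zero f2
  have hm : m = 0 := by
    let p : ((XU U).V1 →ₗ[k] M.V1) × ((XU U).V2 →ₗ[k] M.V2) :=
      (LinearMap.toSpanSingleton k M.V1 m, U.liftQ L hUL)
    have hp : p ∈ KHom (XU U) M := by
      intro i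
      refine LinearMap.ext_ring (R := k) ?_
      change U.liftQ L hUL ((1 : k) • U.mkQ (Pi.single i 1)) = M.f i ((1 : k) • m)
      rw [one_smul, one_smul, Submodule.mkQ_apply, Submodule.liftQ_apply]
      simp [L]
    rw [hhom U hU, Submodule.mem_bot] at hp
    have h1 : LinearMap.toSpanSingleton k M.V1 m = 0 := congrArg Prod.fst hp
    simpa using LinearMap.congr_fun h1 (1 : k)
  have hf1 : f1 = 0 := LinearMap.ext_ring (R := k) hm
  have hg : g = 0 := by
    refine LinearMap.pi_ext' fun i => LinearMap.ext_ring ?_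
    change g (Pi.single i 1) = 0
    rw [hei, hm]
    exact map_zero _
  have hf2 : f2 = 0 := by
    refine LinearMap.ext fun q => ?_
    obtain ⟨v, rfl⟩ := V.mkQ_surjective q
    exact LinearMap.congr_fun hg v
  rw [hf1, hf2]
  exact Submodule.zero_mem _
end

section
/- Let r = 3 and let E be the representation of Γ₃ with E₁ = E₂ = k², E(γ₁) = id, E(γ₂)(a,b) = (b,0) and E(γ₃)(a,b) = (0,a). Then for every 2-dimensional subspace U ∈ Gr_{2,3} of k³ one has Hom(X_U, E) = 0 and Hom(E, X_U) = 0. Moreover, every indecomposable proper nonzero subrepresentation of E has dimension vector (0,1) or (1,2). -/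
open Module LinearMap

universe u

variable {k : Type u} [Field k] {r : ℕ}

/-- Ringel's elementary representation `E` of `Γ₃`: `E₁ = E₂ = k²`,
`E(γ₁) = id`, `E(γ₂)(a,b) = (b,0)`, `E(γ₃)(a,b) = (0,a)`. -/
noncomputable def ERingel (k : Type u) [Field k] : KRep k 3 where
  V1 := Fin 2 → k
  V2 := Fin 2 → k
  f := ![LinearMap.id, Matrix.toLin' !![0, 1; 0, 0], Matrix.toLin' !![0, 0; 1, 0]]

theorem ERingel_f0 (v : Fin 2 → k) : (ERingel k).f 0 v = v := rfl

theorem ERingel_f1 (v : Fin 2 → k) : (ERingel k).f 1 v = (![v 1, 0] : Fin 2 → k) := by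
  change Matrix.toLin' !![(0 : k), 1; 0, 0] v = _
  ext i; fin_cases i <;> simp [Matrix.mulVec, dotProduct, Fin.sum_univ_two]

theorem ERingel_f2 (v : Fin 2 → k) : (ERingel k).f 2 v = (![0, v 0] : Fin 2 → k) := by
  change Matrix.toLin' !![(0 : k), 0; 1, 0] v = _
  ext i; fin_cases i <;> simp [Matrix.mulVec, dotProduct, Fin.sum_univ_two]

theorem ERingel_homXE (U : Submodule k (Fin 3 → k)) (hU : finrank k U = 2) 
    (f1 : k →ₗ[k] (Fin 2 → k)) (f2 : ((Fin 3 → k) ⧸ U) →ₗ[k] (Fin 2 → k))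
    (h0 : f2 (Submodule.Quotient.mk (Pi.single 0 1)) = f1 1)
    (h1 : f2 (Submodule.Quotient.mk (Pi.single 1 1)) = ![f1 1 1, 0])
    (h2 : f2 (Submodule.Quotient.mk (Pi.single 2 1)) = ![0, f1 1 0]) :
    f1 = 0 ∧ f2 = 0 := by
  set v := f1 1 with hv
  have key : ∀ α : Fin 3 → k, f2 (Submodule.Quotient.mk α) =
      ![α 0 * v 0 + α 1 * v 1, α 0 * v 1 + α 2 * v 0] := by
    intro α
    have : α = α 0 • Pi.single 0 1 + α 1 • Pi.single 1 1 + α 2 • Pi.single 2 1 := by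
      ext i; fin_cases i <;> simp
    conv_lhs => rw [this]
    simp only [Submodule.Quotient.mk_add, Submodule.Quotient.mk_smul, map_add, map_smul, h0, h1, h2]
    ext i; fin_cases i <;> simp [Matrix.vecHead, Matrix.vecTail]
  have hz : v = 0 := by
    by_contra hne
    have hab : v 0 ≠ 0 ∨ v 1 ≠ 0 := by
      by_contra! hc
      apply hne
      ext i; fin_cases i
      · exact hc.1
      · exact hc.2
    have hle : U ≤ Submodule.span k {(![v 0 * v 1, -(v 0)^2, -(v 1)^2] : Fin 3 → k)} := by
      intro α hα
      have e : f2 (Submodule.Quotient.mk α) = 0 := by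
        rw [(Submodule.Quotient.mk_eq_zero U).2 hα, map_zero]
      rw [key] at e
      have e0 : α 0 * v 0 + α 1 * v 1 = 0 := by simpa using congrFun e 0
      have e1 : α 0 * v 1 + α 2 * v 0 = 0 := by simpa using congrFun e 1
      rw [Submodule.mem_span_singleton]
      rcases hab with ha | hb
      · refine ⟨-α 1 / (v 0)^2, ?_⟩
        ext i; fin_cases i
        · simp; field_simp; linear_combination -e0
        · simp; field_simp
        · simp; field_simp; linear_combination (v 1) * e0 - v 0 * e1
      · refine ⟨-α 2 / (v 1)^2, ?_⟩
        ext i; fin_cases i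
        · simp; field_simp; linear_combination -e1
        · simp; field_simp; linear_combination (v 0) * e1 - v 1 * e0
        · simp; field_simp
    have := Submodule.finrank_mono hle
    have h' := finrank_span_le_card (R := k)
      ({(![v 0 * v 1, -(v 0)^2, -(v 1)^2] : Fin 3 → k)} : Set (Fin 3 → k))
    rw [Set.toFinset_singleton, Finset.card_singleton] at h'
    omega
  refine ⟨LinearMap.ext_ring (by simpa [hv] using hz), ?_⟩
  apply LinearMap.ext
  intro x
  obtain ⟨α, rfl⟩ := Submodule.Quotient.mk_surjective U x
  rw [key, hz]
  ext i; fin_cases i <;> simp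

theorem ERingel_homEX (U : Submodule k (Fin 3 → k)) (hU : finrank k U = 2)
    (f1 : (Fin 2 → k) →ₗ[k] k) (f2 : (Fin 2 → k) →ₗ[k] ((Fin 3 → k) ⧸ U))
    (h0 : ∀ v, f2 v = f1 v • Submodule.Quotient.mk (Pi.single 0 1))
    (h1 : ∀ v, f2 ![v 1, 0] = f1 v • Submodule.Quotient.mk (Pi.single 1 1))
    (h2 : ∀ v, f2 ![0, v 0] = f1 v • Submodule.Quotient.mk (Pi.single 2 1)) :
    f1 = 0 ∧ f2 = 0 := by
  have hz : ¬ ((Submodule.Quotient.mk (Pi.single 0 1) : (Fin 3 → k) ⧸ U) = 0 ∧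
      (Submodule.Quotient.mk (Pi.single 1 1) : (Fin 3 → k) ⧸ U) = 0 ∧
      (Submodule.Quotient.mk (Pi.single 2 1) : (Fin 3 → k) ⧸ U) = 0) := by
    rintro ⟨a, b, c⟩
    have : U = ⊤ := by
      rw [eq_top_iff]
      intro α _
      rw [Submodule.Quotient.mk_eq_zero] at a b c
      have : α = α 0 • Pi.single 0 1 + α 1 • Pi.single 1 1 + α 2 • Pi.single 2 1 := by
        ext i; fin_cases i <;> simp
      rw [this]
      exact U.add_mem (U.add_mem (U.smul_mem _ a) (U.smul_mem _ b)) (U.smul_mem _ c)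
    rw [this] at hU
    simp at hU
  generalize (Submodule.Quotient.mk (Pi.single 0 1) : (Fin 3 → k) ⧸ U) = A at *
  generalize (Submodule.Quotient.mk (Pi.single 1 1) : (Fin 3 → k) ⧸ U) = B at *
  generalize (Submodule.Quotient.mk (Pi.single 2 1) : (Fin 3 → k) ⧸ U) = C at *
  have z2 : f2 ![0, 0] = 0 := by
    rw [show (![0, 0] : Fin 2 → k) = 0 by ext i; fin_cases i <;> rfl, map_zero]
  have a1 := h1 ![1, 0]
  have a2 := h2 ![1, 0]
  have b1 := h1 ![0, 1]
  have b2 := h2 ![0, 1]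
  have a0 := h0 ![1, 0]
  have b0 := h0 ![0, 1]
  simp only [Matrix.cons_val_zero, Matrix.cons_val_one, z2] at a1 a2 b1 b2
  rw [a0] at b1
  rw [b0] at a2
  have hp : f1 ![1, 0] = 0 := by
    by_contra hp
    have hB : B = 0 := (smul_eq_zero.1 a1.symm).resolve_left hp
    have hA : A = 0 := by
      rw [hB, smul_zero] at b1
      exact (smul_eq_zero.1 b1).resolve_left hp
    rw [hA, smul_zero] at a2
    exact hz ⟨hA, hB, (smul_eq_zero.1 a2.symm).resolve_left hp⟩
  have hq : f1 ![0, 1] = 0 := by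
    by_contra hp
    have hC : C = 0 := (smul_eq_zero.1 b2.symm).resolve_left hp
    have hA : A = 0 := by
      rw [hC, smul_zero] at a2
      exact (smul_eq_zero.1 a2).resolve_left hp
    rw [hA, smul_zero] at b1
    exact hz ⟨hA, (smul_eq_zero.1 b1.symm).resolve_left hp, hC⟩
  have hf : f1 = 0 := by
    ext v
    have : (Pi.single v 1 : Fin 2 → k) = ![1, 0] ∨ (Pi.single v 1 : Fin 2 → k) = ![0, 1] := by
      fin_cases v
      · left; ext i; fin_cases i <;> simp
      · right; ext i; fin_cases i <;> simp
    rcases this with h | h <;> simp [h, hp, hq]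
  refine ⟨hf, ?_⟩
  apply LinearMap.ext
  intro v
  rw [h0, hf]; simp

theorem ERingel_top_of_ne (W1 W2 : Submodule k (Fin 2 → k))
    (h0 : ∀ v ∈ W1, v ∈ W2) (h1 : ∀ v ∈ W1, ![v 1, 0] ∈ W2) (h2 : ∀ v ∈ W1, ![0, v 0] ∈ W2)
    (hne : W1 ≠ ⊥) : W2 = ⊤ := by
  obtain ⟨v, hv, hv0⟩ := Submodule.exists_mem_ne_zero_of_ne_bot hne
  have m0 := h0 v hv
  have m1 := h1 v hv
  have m2 := h2 v hv
  rw [eq_top_iff]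
  intro x _
  by_cases ha : v 0 = 0
  · have hb : v 1 ≠ 0 := by
      intro hb
      apply hv0
      ext i; fin_cases i
      · exact ha
      · exact hb
    have : x = (x 0 / v 1) • ![v 1, 0] + (x 1 / v 1) • v := by
      ext i; fin_cases i <;> simp [ha, hb]
    rw [this]
    exact W2.add_mem (W2.smul_mem _ m1) (W2.smul_mem _ m0)
  · have : x = (x 0 / v 0) • v + ((x 1 - x 0 / v 0 * v 1) / v 0) • ![0, v 0] := by
      ext i; fin_cases i <;> simp [ha]
    rw [this]
    exact W2.add_mem (W2.smul_mem _ m0) (W2.smul_mem _ m2)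

/-- The simple projective representation `(0, k)`. -/
def KSimpleProj (k : Type u) [Field k] (r : ℕ) : KRep k r where
  V1 := PUnit.{u+1}
  V2 := k
  f := fun _ => 0

theorem KSimpleProj_nonzero : (KSimpleProj k r).Nonzero := by
  right
  change finrank k k ≠ 0
  simp

theorem KRep_decomp (M : KRep k r) (h1 : finrank k M.V1 = 0) (h2 : finrank k M.V2 = 2) :
    ¬ M.Indecomposable := by
  rintro ⟨_, h⟩
  refine h _ _ KSimpleProj_nonzero KSimpleProj_nonzero ?_
  have hs : Subsingleton M.V1 := finrank_zero_iff.1 h1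
  have e1 : M.V1 ≃ₗ[k] (PUnit.{u+1} × PUnit.{u+1}) :=
    LinearEquiv.ofFinrankEq _ _ (by rw [h1]; exact (finrank_zero_of_subsingleton).symm)
  have e2 : M.V2 ≃ₗ[k] (k × k) :=
    LinearEquiv.ofFinrankEq _ _ (by rw [h2]; simp)
  refine ⟨e1, e2, fun i => ?_⟩
  apply LinearMap.ext
  intro x
  rw [Subsingleton.elim x 0, map_zero, map_zero]

/-- For every `2`-dimensional subspace `U ∈ Gr_{2,3}` of `k³`,
`Hom(X_U, E) = 0` and `Hom(E, X_U) = 0`; moreover every indecomposable proper nonzero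
subrepresentation of `E` has dimension vector `(0,1)` or `(1,2)`. -/
theorem ERingel_orthogonal_and_subreps :
    (∀ U : Submodule k (Fin 3 → k), finrank k U = 2 →
      KHom (XU U) (ERingel k) = ⊥ ∧ KHom (ERingel k) (XU U) = ⊥) ∧
    (∀ (W1 : Submodule k (ERingel k).V1) (W2 : Submodule k (ERingel k).V2)
      (h : ∀ i, W1 ≤ W2.comap ((ERingel k).f i)),
      ((ERingel k).subRep W1 W2 h).Indecomposable → ¬ (W1 = ⊤ ∧ W2 = ⊤) →
      (finrank k W1 = 0 ∧ finrank k W2 = 1) ∨ (finrank k W1 = 1 ∧ finrank k W2 = 2)) := by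
  refine ⟨fun U hU => ⟨?_, ?_⟩, ?_⟩
  · rw [eq_bot_iff]
    rintro ⟨f1, f2⟩ hf
    have e : ∀ i, f2 (Submodule.Quotient.mk (Pi.single i 1)) = (ERingel k).f i (f1 (1 : k)) := by
      intro i
      have h' : f2 ((1 : k) • (Submodule.Quotient.mk (Pi.single i 1) : (Fin 3 → k) ⧸ U)) =
        (ERingel k).f i (f1 (1 : k)) := LinearMap.congr_fun (hf i) (1 : k)
      rw [one_smul] at h'
      exact h'
    obtain ⟨a, b⟩ := ERingel_homXE U hU f1 f2 (e 0)
      ((e 1).trans (ERingel_f1 _)) ((e 2).trans (ERingel_f2 _))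
    exact (Submodule.mem_bot k).2 (Prod.ext a b)
  · rw [eq_bot_iff]
    rintro ⟨f1, f2⟩ hf
    have e : ∀ i (v : Fin 2 → k), f2 ((ERingel k).f i v) =
        (show k from f1 v) • (Submodule.Quotient.mk (Pi.single i 1) : (Fin 3 → k) ⧸ U) :=
      fun i v => LinearMap.congr_fun (hf i) v
    obtain ⟨a, b⟩ := ERingel_homEX U hU f1 f2 (e 0)
      (fun v => by rw [← ERingel_f1]; exact e 1 v)
      (fun v => by rw [← ERingel_f2]; exact e 2 v)
    exact (Submodule.mem_bot k).2 (Prod.ext a b)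
  · intro W1 W2 h hind hprop
    have d1 : finrank k W1 ≤ 2 :=
      (Submodule.finrank_le W1).trans (finrank_fin_fun (R := k) (n := 2)).le
    have d2 : finrank k W2 ≤ 2 :=
      (Submodule.finrank_le W2).trans (finrank_fin_fun (R := k) (n := 2)).le
    by_cases hW : W1 = ⊥
    · left
      have z1 : finrank k W1 = 0 := by rw [hW]; exact finrank_bot k _
      refine ⟨z1, ?_⟩
      have n0 : finrank k W2 ≠ 0 := fun z2 => hind.1.elim (fun t => t z1) (fun t => t z2)
      have n2 : finrank k W2 ≠ 2 := fun z2 => KRep_decomp _ z1 z2 hind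
      omega
    · right
      have ht : W2 = ⊤ := ERingel_top_of_ne W1 W2 (fun v hv => h 0 hv)
        (fun v hv => by rw [← ERingel_f1]; exact h 1 hv)
        (fun v hv => by rw [← ERingel_f2]; exact h 2 hv) hW
      have n0 : finrank k W1 ≠ 0 := fun t => hW (Submodule.finrank_eq_zero.1 t)
      have n2 : finrank k W1 ≠ 2 := fun t => hprop
        ⟨Submodule.eq_top_of_finrank_eq (t.trans (finrank_fin_fun (R := k) (n := 2)).symm), ht⟩
      refine ⟨by omega, ?_⟩
      rw [ht]
      exact finrank_top k _ |>.trans (finrank_fin_fun (R := k) (n := 2))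
end
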